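/- arXiv:1805.01504 — 2 statements merged into one kernel-verified Lean document; each statement's English description precedes it below -/
import Mathlib

section
/- Let P ⊂ ℝ^n be a lattice polytope of dimension k and let φ : ℝ^n → ℂ be a homogeneous polynomial function of degree d. Then there exist polynomials D and D° in one variable, each of degree at most d + k, such that for every integer q > 0, D(q) = Σ_{m ∈ ℤ^n ∩ qP} φ(m) and D°(q) = Σ_{m ∈ ℤ^n ∩ relint(qP)} φ(m), and these polynomials satisfy the reciprocity law D(−X) = (−1)^{d+k} · D°(X) as an identity of polynomials. -/
/-!
The proof is by homogenization, triangulation and half-open decomposition.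

Let `W ⊂ ℝⁿ × ℝ` be the span of the vectors `(s, 1)`, `s ∈ S`, of dimension `k + 1`. At height `q`,
the cone over these vectors is `qP`, and the conical combinations with all coefficients positive
form the relative interior of `qP` (`mem_intrinsicInterior_convexHull_iff`).

Generic heights `ω` on the generators define a regular triangulation of the cone: minimizing the
height over all ways of writing a generic point as a nonnegative combination of generators gives a
unique optimum, supported on a basis of `W` (`exists_cell`, `IsCell.subset_of_common`). For a
generic `w` in the interior of the cone, the points `x` with `x + ε w` inside a given open cell for
all small `ε > 0` form a half-open simplicial cone; these partition the cone. Using `-w` instead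
partitions the interior of the cone into half-open cones with exactly the complementary choice of
facets (`exists_decomposition`).

It remains to treat one half-open simplicial cone (`exists_halfOpenCone_poly`). Its lattice points
are uniquely a point of the half-open fundamental box plus a natural combination of the generators,
and the lattice points of the complementary half-open cone are uniquely a positive integer
combination minus a point of the same box. This reduces both sums to polynomial sums over dilated
standard simplices (`exists_simplex_sum`), where polynomiality and reciprocity follow by iterated
discrete convolution of powers, computed with Bernoulli polynomials. The sign is `(-1) ^ k` from the
simplex times `(-1) ^ d` from the homogeneity of the weight.
-/

open scoped Pointwise Classical
open MeasureTheory Polynomial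

noncomputable section

/-- The real vector corresponding to an integer vector in `ℤ^n ⊂ ℝ^n`. -/
def intVec {n : ℕ} (m : Fin n → ℤ) : Fin n → ℝ := fun i => (m i : ℝ)

/-- `F` is a face of the polytope `P`: either `P` itself or a nonempty set of maximizers
over `P` of a linear functional. -/
def IsFaceOf {n : ℕ} (P F : Set (Fin n → ℝ)) : Prop :=
  F = P ∨ (F.Nonempty ∧ ∃ u : (Fin n → ℝ) →ₗ[ℝ] ℝ,
    F = {x | x ∈ P ∧ ∀ p ∈ P, u p ≤ u x})

/-- The dimension of (the affine span of) a face. -/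
noncomputable def faceDim {n : ℕ} (F : Set (Fin n → ℝ)) : ℕ :=
  Module.finrank ℝ (affineSpan ℝ F).direction

/-- A polytope `P ⊂ ℝ^n` is simple if every vertex (`0`-dimensional face) lies on
exactly `n` edges (`1`-dimensional faces). -/
def IsSimple {n : ℕ} (P : Set (Fin n → ℝ)) : Prop :=
  ∀ v, IsFaceOf P v → faceDim v = 0 →
    {E | IsFaceOf P E ∧ faceDim E = 1 ∧ v ⊆ E}.ncard = n

/-! ### Polynomial sums over dilated standard simplices -/

theorem exists_indefinite_sum_pow (m : ℕ) : ∃ U : ℂ[X], U.natDegree ≤ m + 1 ∧ U.eval 0 = 0 ∧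
    ∀ x : ℂ, U.eval (x + 1) = U.eval x + x ^ m := by
  set B : ℂ[X] := (Polynomial.bernoulli (m + 1)).map (algebraMap ℚ ℂ) with hB
  have hdeg : B.natDegree ≤ m + 1 := by
    refine (Polynomial.natDegree_map_le).trans ?_
    rw [Polynomial.bernoulli]
    refine Polynomial.natDegree_sum_le_of_forall_le _ _ fun i hi => ?_
    refine (Polynomial.natDegree_monomial_le _).trans ?_
    have := Finset.mem_range.1 hi
    omega
  have hstep : ∀ x : ℂ, B.eval (x + 1) = B.eval x + ((m : ℂ) + 1) * x ^ m := by
    intro x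
    have h := congrArg (fun q : ℚ[X] => (q.map (algebraMap ℚ ℂ)).eval x)
      (Polynomial.bernoulli_comp_one_add_X (m + 1))
    simp only [Polynomial.map_comp, Polynomial.eval_comp, ← hB, Polynomial.map_add,
      Polynomial.map_one, Polynomial.map_X, Polynomial.eval_add, Polynomial.eval_one,
      Polynomial.eval_X] at h
    rw [add_comm x 1, h]
    simp
  refine ⟨C (((m : ℂ) + 1)⁻¹) * (B - C (B.eval 0)), ?_, by simp, fun x => ?_⟩
  · refine (Polynomial.natDegree_C_mul_le _ _).trans ?_
    rw [Polynomial.natDegree_sub_C]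
    exact hdeg
  · have hm : ((m : ℂ) + 1) ≠ 0 := by exact_mod_cast Nat.succ_ne_zero m
    simp only [Polynomial.eval_mul, Polynomial.eval_C, Polynomial.eval_sub, hstep]
    field_simp
    ring

/-- The restriction of `i ↦ g (-i)` to positive `i`, extended by zero to `i = 0`. -/
def negSeq (g : ℂ[X]) (i : ℕ) : ℂ := if 0 < i then g.eval (-(i : ℂ)) else 0

/-- Convolution of two powers. Its value at `-N` is minus the convolution of the reflected
sequences, because an indefinite sum `U` of `x ^ m` satisfies `U (-N) = -∑_{1 ≤ i ≤ N} (-i) ^ m`. -/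
theorem exists_convolution_pow (a b : ℕ) : ∃ h : ℂ[X], h.natDegree ≤ a + b + 1 ∧
    (∀ N : ℕ, h.eval (N : ℂ) =
      ∑ ij ∈ Finset.HasAntidiagonal.antidiagonal N, (ij.1 : ℂ) ^ a * (ij.2 : ℂ) ^ b) ∧
    (∀ N : ℕ, 0 < N → h.eval (-(N : ℂ)) =
      -∑ ij ∈ Finset.HasAntidiagonal.antidiagonal N, negSeq (X ^ a) ij.1 * negSeq (X ^ b) ij.2) := by
  choose U hdeg h0 hU using exists_indefinite_sum_pow
  have hpos : ∀ m N : ℕ, (U m).eval (N : ℂ) = ∑ i ∈ Finset.range N, (i : ℂ) ^ m := by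
    intro m N
    induction N with
    | zero => simp [h0]
    | succ N ih => rw [Nat.cast_succ, hU, ih, Finset.sum_range_succ]
  have hneg : ∀ m N : ℕ, (U m).eval (-(N : ℂ)) =
      -∑ i ∈ Finset.range N, (-((i : ℂ) + 1)) ^ m := by
    intro m N
    induction N with
    | zero => simp [h0]
    | succ N ih =>
      have := hU m (-((N : ℂ) + 1))
      rw [show -((N : ℂ) + 1) + 1 = -N by ring, ih] at this
      rw [Nat.cast_succ, Finset.sum_range_succ]
      linear_combination -this
  -- expand `(N - i) ^ b` binomially and sum each power of `i` with `U`
  refine ⟨∑ l ∈ Finset.range (b + 1),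
    C ((-1 : ℂ) ^ (b - l) * (b.choose l : ℂ)) * (X ^ l * (U (a + (b - l))).comp (X + 1)),
    ?_, ?_, ?_⟩
  · refine Polynomial.natDegree_sum_le_of_forall_le _ _ fun l hl => ?_
    have hl' := Finset.mem_range.1 hl
    refine (Polynomial.natDegree_C_mul_le _ _).trans (Polynomial.natDegree_mul_le.trans ?_)
    have h1 : ((U (a + (b - l))).comp (X + 1 : ℂ[X])).natDegree ≤ a + (b - l) + 1 := by
      refine Polynomial.natDegree_comp_le.trans ?_
      have : (X + 1 : ℂ[X]).natDegree = 1 := by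
        simpa using Polynomial.natDegree_X_add_C (1 : ℂ)
      rw [this, mul_one]
      exact hdeg _
    have h2 := Polynomial.natDegree_X_pow_le (R := ℂ) l
    omega
  · intro N
    rw [Finset.Nat.sum_antidiagonal_eq_sum_range_succ
      (f := fun i j : ℕ => (i : ℂ) ^ a * (j : ℂ) ^ b)]
    simp only [Polynomial.eval_finsetSum, Polynomial.eval_mul, Polynomial.eval_C,
      Polynomial.eval_pow, Polynomial.eval_X, Polynomial.eval_comp, Polynomial.eval_add,
      Polynomial.eval_one]
    have : ∀ m, (U m).eval ((N : ℂ) + 1) = ∑ i ∈ Finset.range (N + 1), (i : ℂ) ^ m := by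
      intro m
      rw [← hpos]; simp
    simp only [this, Finset.mul_sum]
    rw [Finset.sum_comm]
    refine Finset.sum_congr rfl fun i hi => ?_
    rw [Nat.cast_sub (by have := Finset.mem_range.1 hi; omega), sub_eq_add_neg, add_pow,
      Finset.mul_sum]
    refine Finset.sum_congr rfl fun l _ => ?_
    rw [neg_pow, pow_add]
    ring
  · intro N hN
    obtain ⟨M, rfl⟩ : ∃ M, N = M + 1 := ⟨N - 1, by omega⟩
    have z : ∀ g, negSeq g 0 = 0 := fun g => by simp [negSeq]
    have hR : ∑ ij ∈ Finset.HasAntidiagonal.antidiagonal (M + 1),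
        negSeq (X ^ a) ij.1 * negSeq (X ^ b) ij.2 =
        ∑ i ∈ Finset.range M, negSeq (X ^ a) (i + 1) * negSeq (X ^ b) (M + 1 - (i + 1)) := by
      rw [Finset.Nat.sum_antidiagonal_eq_sum_range_succ
        (f := fun i j : ℕ => negSeq (X ^ a) i * negSeq (X ^ b) j),
        Finset.sum_range_succ, Finset.sum_range_succ']
      simp only [Nat.sub_self, z, mul_zero, zero_mul, add_zero]
    rw [hR]
    simp only [Polynomial.eval_finsetSum, Polynomial.eval_mul, Polynomial.eval_C,
      Polynomial.eval_pow, Polynomial.eval_X, Polynomial.eval_comp, Polynomial.eval_add,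
      Polynomial.eval_one]
    have : ∀ m, (U m).eval (-((M + 1 : ℕ) : ℂ) + 1) =
        -∑ i ∈ Finset.range M, (-((i : ℂ) + 1)) ^ m := by
      intro m
      rw [← hneg]; congr 1; push_cast; ring
    simp only [this, Finset.mul_sum, ← Finset.sum_neg_distrib]
    rw [Finset.sum_comm]
    refine Finset.sum_congr rfl fun i hi => ?_
    have hi' := Finset.mem_range.1 hi
    have e : (-(((M + 1 : ℕ) : ℂ)) + ((i : ℂ) + 1)) ^ b = negSeq (X ^ b) (M + 1 - (i + 1)) := by
      rw [negSeq, if_pos (by omega), Nat.cast_sub (by omega)]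
      simp only [Polynomial.eval_pow, Polynomial.eval_X]
      push_cast
      congr 1
      ring
    rw [← e, add_pow, Finset.mul_sum, ← Finset.sum_neg_distrib]
    refine Finset.sum_congr rfl fun l _ => ?_
    simp only [negSeq, if_pos (Nat.succ_pos i), Polynomial.eval_pow, Polynomial.eval_X]
    push_cast
    rw [pow_add, neg_pow ((i : ℂ) + 1) (b - l)]
    have s : ((-1 : ℂ) ^ (b - l)) * (-1) ^ (b - l) = 1 := by rw [← mul_pow]; simp
    linear_combination (-((b.choose l : ℂ) * (-((M : ℂ) + 1)) ^ l * (-((i : ℂ) + 1)) ^ a *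
      ((i : ℂ) + 1) ^ (b - l))) * s

/-- Discrete convolution of `X ^ a` with a polynomial is again polynomial, and its values at
negative integers are, up to sign, the convolution of the reflected sequences. -/
theorem exists_convolution (a e : ℕ) (g : ℂ[X]) (hg : g.natDegree ≤ e) :
    ∃ h : ℂ[X], h.natDegree ≤ a + e + 1 ∧
    (∀ N : ℕ, h.eval (N : ℂ) =
      ∑ ij ∈ Finset.HasAntidiagonal.antidiagonal N, (ij.1 : ℂ) ^ a * g.eval (ij.2 : ℂ)) ∧
    (∀ N : ℕ, 0 < N → h.eval (-(N : ℂ)) =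
      -∑ ij ∈ Finset.HasAntidiagonal.antidiagonal N, negSeq (X ^ a) ij.1 * negSeq g ij.2) := by
  choose H hdeg hp hn using exists_convolution_pow a
  refine ⟨∑ l ∈ Finset.range (e + 1), C (g.coeff l) * H l, ?_, ?_, ?_⟩
  · refine Polynomial.natDegree_sum_le_of_forall_le _ _ fun l hl => ?_
    have := Finset.mem_range.1 hl
    exact (Polynomial.natDegree_C_mul_le _ _).trans ((hdeg l).trans (by omega))
  · intro N
    simp only [Polynomial.eval_finsetSum, Polynomial.eval_mul, Polynomial.eval_C, hp,
      Finset.mul_sum]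
    rw [Finset.sum_comm]
    refine Finset.sum_congr rfl fun ij _ => ?_
    rw [Polynomial.eval_eq_sum_range' (Nat.lt_succ_of_le hg), Finset.mul_sum]
    exact Finset.sum_congr rfl fun l _ => by ring
  · intro N hN
    simp only [Polynomial.eval_finsetSum, Polynomial.eval_mul, Polynomial.eval_C, hn _ N hN,
      Finset.mul_sum, ← Finset.sum_neg_distrib]
    rw [Finset.sum_comm]
    refine Finset.sum_congr rfl fun ij _ => ?_
    have : negSeq g ij.2 = ∑ l ∈ Finset.range (e + 1), g.coeff l * negSeq (X ^ l) ij.2 := by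
      unfold negSeq
      split_ifs
      · rw [Polynomial.eval_eq_sum_range' (Nat.lt_succ_of_le hg)]
        simp
      · simp
    rw [this, Finset.mul_sum, ← Finset.sum_neg_distrib]
    exact Finset.sum_congr rfl fun l _ => by ring

/-- Reciprocity for monomials summed over the dilates of a standard simplex, phrased through
the generating series of the sequences `i ↦ i ^ a` and their reflections. -/
theorem exists_coeff_prod {κ : Type*} (a : κ → ℕ) (s : Finset κ) (hs : s.Nonempty) :
    ∃ F : ℂ[X], F.natDegree + 1 ≤ ∑ i ∈ s, a i + s.card ∧
    (∀ N : ℕ, F.eval (N : ℂ) =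
      PowerSeries.coeff N (∏ i ∈ s, PowerSeries.mk fun j : ℕ => (j : ℂ) ^ a i)) ∧
    (∀ N : ℕ, 0 < N → F.eval (-(N : ℂ)) = (-1) ^ (s.card + 1) *
      PowerSeries.coeff N (∏ i ∈ s, PowerSeries.mk fun j : ℕ => negSeq (X ^ a i) j)) := by
  induction hs using Finset.Nonempty.cons_induction with
  | singleton i =>
    refine ⟨X ^ a i, ?_, ?_, ?_⟩
    · simp
    · intro N; simp
    · intro N hN; simp [negSeq, hN]
  | cons i s hi hs ih =>
    obtain ⟨F, hdeg, hp, hn⟩ := ih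
    obtain ⟨h, hd, hhp, hhn⟩ := exists_convolution (a i) F.natDegree F le_rfl
    refine ⟨h, ?_, ?_, ?_⟩
    · rw [Finset.sum_cons, Finset.card_cons]; omega
    · intro N
      rw [hhp, Finset.prod_cons, PowerSeries.coeff_mul]
      exact Finset.sum_congr rfl fun ij _ => by rw [PowerSeries.coeff_mk, hp]
    · intro N hN
      rw [hhn N hN, Finset.prod_cons, PowerSeries.coeff_mul, Finset.mul_sum,
        ← Finset.sum_neg_distrib, Finset.card_cons]
      refine Finset.sum_congr rfl fun ij _ => ?_
      rw [PowerSeries.coeff_mk]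
      have : negSeq F ij.2 = (-1) ^ (s.card + 1) * PowerSeries.coeff ij.2
          (∏ i ∈ s, PowerSeries.mk fun j : ℕ => negSeq (X ^ a i) j) := by
        rcases Nat.eq_zero_or_pos ij.2 with h0 | h0
        · obtain ⟨t, ht⟩ := hs
          have : PowerSeries.constantCoeff
              (∏ i ∈ s, PowerSeries.mk fun j : ℕ => negSeq (X ^ a i) j) = 0 := by
            rw [map_prod]
            refine Finset.prod_eq_zero ht ?_
            rw [← PowerSeries.coeff_zero_eq_constantCoeff_apply, PowerSeries.coeff_mk]
            simp [negSeq]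
          rw [h0, PowerSeries.coeff_zero_eq_constantCoeff_apply, this]
          simp [negSeq]
        · rw [negSeq, if_pos h0, hn _ h0]
      rw [this, pow_succ _ (s.card + 1)]
      ring

theorem coeff_prod_mk {κ : Type*} [Fintype κ] (g : κ → ℕ → ℂ) (N : ℕ) :
    PowerSeries.coeff N (∏ i, PowerSeries.mk (g i)) =
      ∑ c ∈ Finset.piAntidiag (Finset.univ : Finset κ) N, ∏ i, g i (c i) := by
  rw [PowerSeries.coeff_prod]
  refine Finset.sum_bij' (fun l _ => (l : κ → ℕ)) (fun c _ => Finsupp.equivFunOnFinite.symm c)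
    ?_ ?_ ?_ ?_ ?_
  · intro l hl
    simpa using hl
  · intro c hc
    simpa using hc
  · intro l _; ext; simp
  · intro c _; ext; simp
  · intro l _; simp

/-- Reciprocity for a polynomial summed over the lattice points of the dilates of a standard
simplex: the value at `-N` is the sum of the reflected polynomial over the interior points. -/
theorem exists_simplex_sum {κ : Type*} [Fintype κ] (k d : ℕ) (hκ : Fintype.card κ = k + 1)
    (p : MvPolynomial κ ℂ) (hp : p.totalDegree ≤ d) :
    ∃ F : ℂ[X], F.natDegree ≤ d + k ∧
    (∀ N : ℕ, F.eval (N : ℂ) = ∑ c ∈ Finset.piAntidiag (Finset.univ : Finset κ) N,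
      MvPolynomial.eval (fun i => (c i : ℂ)) p) ∧
    (∀ N : ℕ, 0 < N → F.eval (-(N : ℂ)) = (-1) ^ k *
      ∑ c ∈ (Finset.piAntidiag (Finset.univ : Finset κ) N).filter (fun c => ∀ i, 0 < c i),
        MvPolynomial.eval (fun i => -(c i : ℂ)) p) := by
  have hne : (Finset.univ : Finset κ).Nonempty := by
    rw [← Finset.card_pos, Finset.card_univ]; omega
  choose F hdeg hF hFn using fun a : κ →₀ ℕ => exists_coeff_prod a Finset.univ hne
  refine ⟨∑ a ∈ p.support, C (p.coeff a) * F a, ?_, ?_, ?_⟩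
  · refine Polynomial.natDegree_sum_le_of_forall_le _ _ fun a ha => ?_
    refine (Polynomial.natDegree_C_mul_le _ _).trans ?_
    have h1 := hdeg a
    have h2 := (MvPolynomial.le_totalDegree ha).trans hp
    rw [Finsupp.sum_fintype _ _ (by simp)] at h2
    rw [Finset.card_univ, hκ] at h1
    omega
  · intro N
    simp only [Polynomial.eval_finsetSum, Polynomial.eval_mul, Polynomial.eval_C, hF,
      coeff_prod_mk, Finset.mul_sum, MvPolynomial.eval_eq']
    rw [Finset.sum_comm]
  · intro N hN
    simp only [Polynomial.eval_finsetSum, Polynomial.eval_mul, Polynomial.eval_C, hFn _ N hN,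
      coeff_prod_mk, Finset.mul_sum, MvPolynomial.eval_eq', Finset.card_univ, hκ]
    rw [Finset.sum_comm, Finset.sum_filter]
    refine Finset.sum_congr rfl fun c _ => ?_
    split_ifs with h
    · refine Finset.sum_congr rfl fun a _ => ?_
      have : ∀ i, negSeq (X ^ a i) (c i) = (-(c i : ℂ)) ^ a i := fun i => by
        simp [negSeq, h i]
      simp only [this]
      ring
    · obtain ⟨i, hi⟩ := not_forall.1 h
      refine Finset.sum_eq_zero fun a _ => ?_
      rw [Finset.prod_eq_zero (Finset.mem_univ i) (by simp [negSeq, hi])]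
      simp

/-! ### Half-open simplicial cones -/

/-- Membership of a coordinate in the half-line `[0, ∞)` if `s` holds, `(0, ∞)` otherwise. -/
def InRay (s : Prop) (t : ℝ) : Prop := 0 < t ∨ (t = 0 ∧ s)

/-- Membership of a coordinate in the unit interval `[0, 1)` if `s` holds, `(0, 1]` otherwise. -/
def InUnit (s : Prop) (t : ℝ) : Prop := (s ∧ 0 ≤ t ∧ t < 1) ∨ (¬s ∧ 0 < t ∧ t ≤ 1)

theorem InUnit.nonneg {s : Prop} {t : ℝ} (h : InUnit s t) : 0 ≤ t := by
  rcases h with h | h <;> linarith [h.2.1]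

theorem InUnit.le_one {s : Prop} {t : ℝ} (h : InUnit s t) : t ≤ 1 := by
  rcases h with h | h <;> linarith [h.2.2]

theorem InUnit.inRay_add {s : Prop} {t : ℝ} (h : InUnit s t) (c : ℕ) : InRay s (t + c) := by
  have hc : (0 : ℝ) ≤ c := Nat.cast_nonneg c
  rcases h with ⟨hs, h0, _⟩ | ⟨_, h0, _⟩
  · rcases (add_nonneg h0 hc).lt_or_eq with h | h
    · exact Or.inl h
    · exact Or.inr ⟨h.symm, hs⟩
  · exact Or.inl (by linarith)

theorem InRay.exists_sub {s : Prop} {x : ℝ} (h : InRay s x) : ∃ c : ℕ, InUnit s (x - c) := by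
  by_cases hs : s
  · have h0 : 0 ≤ x := by rcases h with h | h <;> linarith [h]
    refine ⟨⌊x⌋₊, Or.inl ⟨hs, ?_, ?_⟩⟩
    · linarith [Nat.floor_le h0]
    · linarith [Nat.lt_floor_add_one x]
  · have h0 : 0 < x := h.resolve_right fun h => hs h.2
    have h1 : 0 < ⌈x⌉₊ := Nat.ceil_pos.2 h0
    refine ⟨⌈x⌉₊ - 1, Or.inr ⟨hs, ?_, ?_⟩⟩ <;> rw [Nat.cast_sub h1, Nat.cast_one]
    · linarith [Nat.ceil_lt_add_one h0.le]
    · linarith [Nat.le_ceil x]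

theorem InUnit.eq_of_sub {s : Prop} {t t' : ℝ} (h : InUnit s t) (h' : InUnit s t') {c c' : ℕ}
    (e : t - t' = (c : ℝ) - c') : c = c' := by
  have h1 : ((c : ℤ) : ℝ) - (c' : ℤ) < 1 := by
    push_cast
    rcases h with h | h <;> rcases h' with h' | h' <;> first | linarith [h.2.2, h'.2.1] | tauto
  have h2 : ((c' : ℤ) : ℝ) - (c : ℤ) < 1 := by
    push_cast
    rcases h with h | h <;> rcases h' with h' | h' <;> first | linarith [h'.2.2, h.2.1] | tauto
  have h1' : (c : ℤ) - c' < 1 := by exact_mod_cast h1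
  have h2' : (c' : ℤ) - c < 1 := by exact_mod_cast h2
  omega

theorem InUnit.inRay_sub {s : Prop} {t : ℝ} (h : InUnit s t) {c : ℕ} (hc : 0 < c) :
    InRay (¬s) (c - t) := by
  have hc : (1 : ℝ) ≤ c := by exact_mod_cast hc
  rcases h with ⟨hs, _, h0⟩ | ⟨hs, _, h0⟩
  · exact Or.inl (by linarith)
  · rcases (show 0 ≤ (c : ℝ) - t by linarith).lt_or_eq with h | h
    · exact Or.inl h
    · exact Or.inr ⟨h.symm, hs⟩

theorem InRay.exists_sub' {s : Prop} {x : ℝ} (h : InRay (¬s) x) :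
    ∃ c : ℕ, 0 < c ∧ InUnit s (c - x) := by
  by_cases hs : s
  · have h0 : 0 < x := h.resolve_right fun h => h.2 hs
    refine ⟨⌈x⌉₊, Nat.ceil_pos.2 h0, Or.inl ⟨hs, ?_, ?_⟩⟩
    · linarith [Nat.le_ceil x]
    · linarith [Nat.ceil_lt_add_one h0.le]
  · have h0 : 0 ≤ x := by rcases h with h | h <;> linarith [h]
    refine ⟨⌊x⌋₊ + 1, Nat.succ_pos _, Or.inr ⟨hs, ?_, ?_⟩⟩ <;> push_cast
    · linarith [Nat.lt_floor_add_one x]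
    · linarith [Nat.floor_le h0]

/-- The simplicial cone on the basis `b` with the facet opposite to `b i` removed exactly when
`σ i` fails. -/
def halfOpenCone {κ W : Type*} [AddCommGroup W] [Module ℝ W] (b : Module.Basis κ ℝ W)
    (σ : κ → Prop) : Set W := {x | ∀ i, InRay (σ i) (b.repr x i)}

theorem finsum_of_bijOn_sigma {α β γ : Type*} (Y : Finset α) (A : α → Finset β)
    (e : (_ : α) × β → γ) (t : Set γ) (f : γ → ℂ)
    (h : Set.BijOn e (Y.sigma A : Set ((_ : α) × β)) t) :
    t.Finite ∧ ∑ᶠ x ∈ t, f x = ∑ y ∈ Y, ∑ c ∈ A y, f (e ⟨y, c⟩) := by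
  refine ⟨?_, ?_⟩
  · rw [← h.image_eq]
    exact (Finset.finite_toSet _).image e
  · rw [← finsum_mem_eq_of_bijOn (f := fun a => f (e a)) e h (fun _ _ => rfl),
      finsum_mem_coe_finset, Finset.sum_sigma]

/-- Weighted Ehrhart reciprocity for a half-open simplicial cone `C` over a lattice simplex.
Each lattice point of `C` is uniquely `y + ∑ i, c i • b i` with `y` in the half-open fundamental
box and `c` natural; each lattice point of the complementary half-open cone is uniquely
`∑ i, c i • b i - y` with `c` positive. -/
theorem exists_halfOpenCone_poly {κ W : Type*} [Fintype κ] [AddCommGroup W] [Module ℝ W]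
    (k d : ℕ) (hκ : Fintype.card κ = k + 1) (b : Module.Basis κ ℝ W)
    (ht : W →ₗ[ℝ] ℝ) (hb : ∀ i, ht (b i) = 1)
    (Λ : AddSubgroup W) (hbΛ : ∀ i, b i ∈ Λ) (hint : ∀ x ∈ Λ, ∃ z : ℤ, ht x = z)
    (hfin : {x | x ∈ Λ ∧ ∀ i, 0 ≤ b.repr x i ∧ b.repr x i ≤ 1}.Finite)
    (f : W → ℂ) (hneg : ∀ x, f (-x) = (-1) ^ d * f x)
    (hpoly : ∀ y, ∃ p : MvPolynomial κ ℂ, p.totalDegree ≤ d ∧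
      ∀ c : κ → ℝ, f (y + ∑ i, c i • b i) = MvPolynomial.eval (fun i => (c i : ℂ)) p)
    (σ : κ → Prop) :
    ∃ F : ℂ[X], F.natDegree ≤ d + k ∧ ∀ q : ℕ, 0 < q →
      ({x | x ∈ Λ ∧ ht x = q ∧ x ∈ halfOpenCone b σ}.Finite ∧
        ∑ᶠ x ∈ {x | x ∈ Λ ∧ ht x = q ∧ x ∈ halfOpenCone b σ}, f x = F.eval (q : ℂ)) ∧
      ({x | x ∈ Λ ∧ ht x = q ∧ x ∈ halfOpenCone b fun i => ¬σ i}.Finite ∧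
        (-1) ^ (d + k) * ∑ᶠ x ∈ {x | x ∈ Λ ∧ ht x = q ∧ x ∈ halfOpenCone b fun i => ¬σ i}, f x =
          F.eval (-(q : ℂ))) := by
  have hht : ∀ x, ht x = ∑ i, b.repr x i := by
    intro x
    conv_lhs => rw [← b.sum_repr x]
    rw [map_sum]
    exact Finset.sum_congr rfl fun i _ => by rw [map_smul, hb, smul_eq_mul, mul_one]
  have hfinY : {y | y ∈ Λ ∧ ∀ i, InUnit (σ i) (b.repr y i)}.Finite :=
    hfin.subset fun y hy => ⟨hy.1, fun i => ⟨(hy.2 i).nonneg, (hy.2 i).le_one⟩⟩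
  set Y : Finset W := hfinY.toFinset with hYdef
  have hY : ∀ y, y ∈ Y ↔ y ∈ Λ ∧ ∀ i, InUnit (σ i) (b.repr y i) := by
    intro y; rw [hYdef]; simp
  have hsumΛ : ∀ c : κ → ℕ, ∑ i, (c i : ℝ) • b i ∈ Λ := by
    intro c
    refine Λ.sum_mem fun i _ => ?_
    rw [Nat.cast_smul_eq_nsmul]
    exact Λ.nsmul_mem (hbΛ i) _
  have hrepr : ∀ (c : κ → ℕ) (i : κ), b.repr (∑ j, (c j : ℝ) • b j) i = c i := by
    intro c i
    rw [b.repr_sum_self]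
  have hhtsum : ∀ c : κ → ℕ, ht (∑ j, (c j : ℝ) • b j) = ((∑ j, c j : ℕ) : ℝ) := by
    intro c
    simp [hb]
  have htY : ∀ y ∈ Y, ∃ t : ℕ, ht y = t ∧ t ≤ k + 1 := by
    intro y hy
    obtain ⟨hyΛ, hyu⟩ := (hY y).1 hy
    obtain ⟨z, hz⟩ := hint y hyΛ
    have h0 : 0 ≤ ht y := by
      rw [hht]; exact Finset.sum_nonneg fun i _ => (hyu i).nonneg
    have h1 : ht y ≤ k + 1 := by
      rw [hht]
      refine (Finset.sum_le_sum fun i _ => (hyu i).le_one).trans ?_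
      simp [hκ]
    rw [hz] at h0 h1
    norm_cast at h0 h1
    refine ⟨z.toNat, ?_, by omega⟩
    rw [hz, ← Int.cast_natCast, Int.toNat_of_nonneg h0]
  choose! t ht_eq ht_le using htY
  choose p hpdeg hpeval using hpoly
  choose G hGdeg hGp hGn using fun y => exists_simplex_sum k d hκ (p y) (hpdeg y)
  refine ⟨∑ y ∈ Y, (G y).comp (X - C (t y : ℂ)), ?_, fun q hq => ⟨?_, ?_⟩⟩
  · refine Polynomial.natDegree_sum_le_of_forall_le _ _ fun y _ => ?_
    refine Polynomial.natDegree_comp_le.trans ?_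
    rw [Polynomial.natDegree_X_sub_C, mul_one]
    exact hGdeg y
  · obtain ⟨h1, h2⟩ := finsum_of_bijOn_sigma Y
      (fun y => if t y ≤ q then Finset.piAntidiag (Finset.univ : Finset κ) (q - t y) else ∅)
      (fun a => a.1 + ∑ i, (a.2 i : ℝ) • b i)
      {x | x ∈ Λ ∧ ht x = q ∧ x ∈ halfOpenCone b σ} f (by
        refine ⟨?_, ?_, ?_⟩
        · rintro ⟨y, c⟩ hyc
          simp only [Finset.mem_coe, Finset.mem_sigma] at hyc
          obtain ⟨hy, hc⟩ := hyc
          obtain ⟨hyΛ, hyu⟩ := (hY y).1 hy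
          split_ifs at hc with htq
          · refine ⟨Λ.add_mem hyΛ (hsumΛ c), ?_, fun i => ?_⟩
            · have := (Finset.mem_piAntidiag.1 hc).1
              rw [map_add, hhtsum, ht_eq y hy, this, Nat.cast_sub htq]
              ring
            · simp only [map_add, Finsupp.add_apply, hrepr]
              exact (hyu i).inRay_add _
          · simp at hc
        · rintro ⟨y, c⟩ hyc ⟨y', c'⟩ hyc' heq
          simp only [Finset.mem_coe, Finset.mem_sigma] at hyc hyc'
          have hyu := ((hY y).1 hyc.1).2
          have hyu' := ((hY y').1 hyc'.1).2
          simp only at heq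
          have hcc : c' = c := by
            funext i
            have := congrArg (fun x => b.repr x i) heq
            simp only [map_add, Finsupp.add_apply, hrepr] at this
            exact (hyu i).eq_of_sub (hyu' i) (by linarith)
          subst hcc
          have := add_right_cancel heq
          subst this
          rfl
        · rintro x ⟨hxΛ, hxq, hx⟩
          choose c hc using fun i => (hx i).exists_sub
          have hy : x - ∑ i, (c i : ℝ) • b i ∈ Y := by
            refine (hY _).2 ⟨Λ.sub_mem hxΛ (hsumΛ c), fun i => ?_⟩
            simp only [map_sub, Finsupp.sub_apply, hrepr]
            exact hc i
          refine ⟨⟨x - ∑ i, (c i : ℝ) • b i, c⟩, ?_, by simp⟩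
          simp only [Finset.mem_coe, Finset.mem_sigma]
          refine ⟨hy, ?_⟩
          have h3 := ht_eq _ hy
          rw [map_sub, hhtsum, hxq, sub_eq_iff_eq_add] at h3
          have h4 : q = t (x - ∑ i, (c i : ℝ) • b i) + ∑ i, c i := by exact_mod_cast h3
          rw [if_pos (by omega), Finset.mem_piAntidiag]
          exact ⟨(Nat.sub_eq_of_eq_add' h4).symm, fun i _ => Finset.mem_univ i⟩)
    refine ⟨h1, h2.trans ?_⟩
    rw [Polynomial.eval_finsetSum]
    refine Finset.sum_congr rfl fun y hy => ?_
    simp only [Polynomial.eval_comp, Polynomial.eval_sub, Polynomial.eval_X, Polynomial.eval_C]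
    split_ifs with htq
    · rw [← Nat.cast_sub htq, hGp]
      refine Finset.sum_congr rfl fun c _ => ?_
      rw [hpeval y]
      simp
    · -- here `t y - q ≤ k`, too small to be a sum of `k + 1` positive integers
      have hk := ht_le y hy
      rw [show (q : ℂ) - t y = -((t y - q : ℕ) : ℂ) by
        rw [Nat.cast_sub (by omega)]; ring, hGn y _ (by omega), Finset.filter_false_of_mem]
      · simp
      · intro c hc hpos
        have h1 : ∑ i, c i = t y - q := (Finset.mem_piAntidiag.1 hc).1
        have h2 : ∑ _i : κ, 1 ≤ ∑ i, c i := Finset.sum_le_sum fun i _ => hpos i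
        simp only [Finset.sum_const, Finset.card_univ, hκ, smul_eq_mul, mul_one] at h2
        omega
  · obtain ⟨h1, h2⟩ := finsum_of_bijOn_sigma Y
      (fun y => (Finset.piAntidiag (Finset.univ : Finset κ) (q + t y)).filter
        fun c => ∀ i, 0 < c i)
      (fun a => ∑ i, (a.2 i : ℝ) • b i - a.1)
      {x | x ∈ Λ ∧ ht x = q ∧ x ∈ halfOpenCone b fun i => ¬σ i} f (by
        refine ⟨?_, ?_, ?_⟩
        · rintro ⟨y, c⟩ hyc
          simp only [Finset.mem_coe, Finset.mem_sigma, Finset.mem_filter] at hyc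
          obtain ⟨hy, hc, hpos⟩ := hyc
          obtain ⟨hyΛ, hyu⟩ := (hY y).1 hy
          refine ⟨Λ.sub_mem (hsumΛ c) hyΛ, ?_, fun i => ?_⟩
          · have := (Finset.mem_piAntidiag.1 hc).1
            rw [map_sub, hhtsum, ht_eq y hy, this, Nat.cast_add]
            ring
          · simp only [map_sub, Finsupp.sub_apply, hrepr]
            exact (hyu i).inRay_sub (hpos i)
        · rintro ⟨y, c⟩ hyc ⟨y', c'⟩ hyc' heq
          simp only [Finset.mem_coe, Finset.mem_sigma] at hyc hyc'
          have hyu := ((hY y).1 hyc.1).2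
          have hyu' := ((hY y').1 hyc'.1).2
          simp only at heq
          have hcc : c = c' := by
            funext i
            have := congrArg (fun x => b.repr x i) heq
            simp only [map_sub, Finsupp.sub_apply, hrepr] at this
            exact (hyu i).eq_of_sub (hyu' i) (by linarith)
          subst hcc
          have := sub_right_injective heq
          subst this
          rfl
        · rintro x ⟨hxΛ, hxq, hx⟩
          choose c hpos hc using fun i => (hx i).exists_sub'
          have hy : ∑ i, (c i : ℝ) • b i - x ∈ Y := by
            refine (hY _).2 ⟨Λ.sub_mem (hsumΛ c) hxΛ, fun i => ?_⟩
            simp only [map_sub, Finsupp.sub_apply, hrepr]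
            exact hc i
          refine ⟨⟨∑ i, (c i : ℝ) • b i - x, c⟩, ?_, by simp⟩
          simp only [Finset.mem_coe, Finset.mem_sigma, Finset.mem_filter]
          refine ⟨hy, ?_, hpos⟩
          have h3 := ht_eq _ hy
          rw [map_sub, hhtsum, hxq, sub_eq_iff_eq_add] at h3
          have h4 : ∑ i, c i = t (∑ i, (c i : ℝ) • b i - x) + q := by exact_mod_cast h3
          rw [Finset.mem_piAntidiag]
          exact ⟨h4.trans (add_comm _ _), fun i _ => Finset.mem_univ i⟩)
    refine ⟨h1, ?_⟩
    rw [h2, Polynomial.eval_finsetSum, Finset.mul_sum]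
    refine Finset.sum_congr rfl fun y hy => ?_
    simp only [Polynomial.eval_comp, Polynomial.eval_sub, Polynomial.eval_X, Polynomial.eval_C]
    rw [show -(q : ℂ) - t y = -((q + t y : ℕ) : ℂ) by push_cast; ring, hGn y _ (by omega),
      Finset.mul_sum, Finset.mul_sum]
    refine Finset.sum_congr rfl fun c _ => ?_
    have h3 : f (∑ i, (c i : ℝ) • b i - y) =
        (-1) ^ d * MvPolynomial.eval (fun i => -(c i : ℂ)) (p y) := by
      have := hpeval y fun i => -(c i : ℝ)
      push_cast at this
      rw [← this, ← hneg]
      congr 1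
      simp [sub_eq_add_neg]
    rw [h3, pow_add]
    have s : ((-1 : ℂ) ^ d) * (-1) ^ d = 1 := by rw [← mul_pow]; simp
    linear_combination ((-1) ^ k * MvPolynomial.eval (fun i => -(c i : ℂ)) (p y)) * s

/-! ### Triangulation and half-open decomposition of a cone -/

section Decomposition

set_option linter.unusedSectionVars false

variable {ι W : Type*} [Fintype ι] [AddCommGroup W] [Module ℝ W]

/-- Points in the closed convex cone generated by the family `v`. -/
def InCone (v : ι → W) (x : W) : Prop := ∃ l : ι → ℝ, (∀ i, 0 ≤ l i) ∧ x = ∑ i, l i • v i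

/-- A vector lying in no proper subspace spanned by members of the family `v`. -/
def IsGeneric (v : ι → W) (x : W) : Prop :=
  ∀ B : Finset ι, Submodule.span ℝ (v '' (B : Set ι)) ≠ ⊤ → x ∉ Submodule.span ℝ (v '' (B : Set ι))

/-- Heights on the family `v` for which no linear dependence over an independent subfamily
lifts to a dependence of heights. -/
def IsGenericHeight (v : ι → W) (ω : ι → ℝ) : Prop :=
  ∀ B : Finset ι, LinearIndepOn ℝ v (B : Set ι) → ∀ j ∉ B, ∀ c : ι → ℝ,
    v j = ∑ i ∈ B, c i • v i → ω j ≠ ∑ i ∈ B, c i * ω i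

theorem exists_isGenericHeight (v : ι → W) : ∃ ω : ι → ℝ, IsGenericHeight v ω := by
  let I := {a : Finset ι × ι // LinearIndepOn ℝ v (a.1 : Set ι) ∧ a.2 ∉ a.1 ∧
    ∃ c : ι → ℝ, v a.2 = ∑ i ∈ a.1, c i • v i}
  choose c hc using fun a : I => a.2.2.2
  let H : I → Subspace ℝ (ι → ℝ) := fun a => LinearMap.ker
    (LinearMap.proj (R := ℝ) (φ := fun _ : ι => ℝ) a.1.2 -
      ∑ i ∈ a.1.1, c a i • LinearMap.proj (R := ℝ) (φ := fun _ : ι => ℝ) i)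
  have hne : ⋃ a, (H a : Set (ι → ℝ)) ≠ Set.univ := by
    intro hu
    obtain ⟨a, ha⟩ := Subspace.exists_eq_top_of_iUnion_eq_univ hu
    have h1 : (Pi.single a.1.2 (1 : ℝ) : ι → ℝ) ∈ H a := by rw [ha]; trivial
    rw [LinearMap.mem_ker] at h1
    simp only [LinearMap.sub_apply, LinearMap.proj_apply, Pi.single_eq_same,
      LinearMap.sum_apply, LinearMap.smul_apply, smul_eq_mul] at h1
    rw [Finset.sum_eq_zero] at h1
    · norm_num at h1
    · intro i hi
      rw [Pi.single_eq_of_ne, mul_zero]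
      rintro rfl
      exact a.2.2.1 hi
  obtain ⟨ω, hω⟩ := (Set.ne_univ_iff_exists_notMem _).1 hne
  refine ⟨ω, fun B hB j hj c' hc' heq => hω ?_⟩
  let a : I := ⟨(B, j), hB, hj, c', hc'⟩
  refine Set.mem_iUnion.2 ⟨a, ?_⟩
  have huniq : ∀ i ∈ B, c a i - c' i = 0 := by
    refine linearIndepOn_finset_iff.1 hB (fun i => c a i - c' i) ?_
    simp only [sub_smul, Finset.sum_sub_distrib]
    rw [← hc', sub_eq_zero]
    exact (hc a).symm
  have : ω j - ∑ i ∈ B, c a i * ω i = 0 := by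
    rw [heq, sub_eq_zero]
    exact Finset.sum_congr rfl fun i hi => by rw [sub_eq_zero.1 (huniq i hi)]
  change ω ∈ LinearMap.ker _
  rw [LinearMap.mem_ker]
  simpa using this

/-- The linear program of writing `x` as a nonnegative combination of minimal height has an
optimum, because a common value of `ht` on the generators bounds the feasible region. -/
theorem InCone.exists_optimum {v : ι → W} (ht : W →ₗ[ℝ] ℝ) (hv : ∀ i, ht (v i) = 1)
    (ω : ι → ℝ) {x : W} (hx : InCone v x) :
    ∃ l : ι → ℝ, (∀ i, 0 ≤ l i) ∧ x = ∑ i, l i • v i ∧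
      ∀ m : ι → ℝ, (∀ i, 0 ≤ m i) → x = ∑ i, m i • v i → ∑ i, l i * ω i ≤ ∑ i, m i * ω i := by
  obtain ⟨l₀, h0, hl0⟩ := hx
  let Φ : (ι → ℝ) →ₗ[ℝ] W := Fintype.linearCombination ℝ v
  have hΦ : ∀ l, Φ l = ∑ i, l i • v i := fun l => Fintype.linearCombination_apply ℝ v l
  let K : Set (ι → ℝ) := {l | (∀ i, 0 ≤ l i) ∧ x = ∑ i, l i • v i}
  have hsub : K ⊆ Set.Icc 0 (fun _ => ht x) := by
    rintro l ⟨hl, hxl⟩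
    refine ⟨hl, fun i => ?_⟩
    have : ht x = ∑ i, l i := by rw [hxl]; simp [hv]
    rw [this]
    exact Finset.single_le_sum (f := l) (fun i _ => hl i) (Finset.mem_univ i)
  have hclosed : IsClosed K := by
    have e : K = (⋂ i, {l : ι → ℝ | 0 ≤ l i}) ∩
        (fun l => l - l₀) ⁻¹' (LinearMap.ker Φ : Set (ι → ℝ)) := by
      ext l
      have hker : l - l₀ ∈ LinearMap.ker Φ ↔ x = ∑ i, l i • v i := by
        rw [LinearMap.mem_ker, map_sub, hΦ, hΦ, ← hl0, sub_eq_zero]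
        exact eq_comm
      simp only [K, Set.mem_ofPred_eq, Set.mem_inter_iff, Set.mem_iInter, Set.mem_preimage,
        SetLike.mem_coe, hker]
    rw [e]
    refine IsClosed.inter (isClosed_iInter fun i => ?_) ?_
    · exact isClosed_le continuous_const (continuous_apply i)
    · exact (Submodule.closed_of_finiteDimensional _).preimage (by fun_prop)
  have hK : IsCompact K := IsCompact.of_isClosed_subset isCompact_Icc hclosed hsub
  obtain ⟨l, hl, hmin⟩ := hK.exists_isMinOn ⟨l₀, h0, hl0⟩
    (f := fun l : ι → ℝ => ∑ i, l i * ω i) (by fun_prop)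
  exact ⟨l, hl.1, hl.2, fun m hm hxm => hmin ⟨hm, hxm⟩⟩

theorem eventually_nonneg_add (a b : ℝ) (ha : 0 ≤ a) (hab : a = 0 → 0 ≤ b) :
    ∀ᶠ t in nhdsWithin (0 : ℝ) (Set.Ioi 0), 0 ≤ a + t * b := by
  rcases ha.lt_or_eq with h | h
  · have : Filter.Tendsto (fun t : ℝ => a + t * b) (nhdsWithin 0 (Set.Ioi 0)) (nhds (a + 0 * b)) :=
      ((continuous_const.add (continuous_id.mul continuous_const)).tendsto 0).mono_left
        nhdsWithin_le_nhds
    rw [zero_mul, add_zero] at this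
    exact (this.eventually_const_lt h).mono fun t ht => ht.le
  · filter_upwards [self_mem_nhdsWithin] with t ht
    rw [← h, zero_add]
    exact mul_nonneg (le_of_lt ht) (hab h.symm)

/-- First-order optimality: a relation among the generators that is feasible as a direction at the
optimum `l` does not decrease the height. -/
theorem optimum_direction {v : ι → W} {ω l : ι → ℝ} (hl : ∀ i, 0 ≤ l i)
    (hmin : ∀ m : ι → ℝ, (∀ i, 0 ≤ m i) → ∑ i, l i • v i = ∑ i, m i • v i →
      ∑ i, l i * ω i ≤ ∑ i, m i * ω i)
    (g : ι → ℝ) (hg : ∑ i, g i • v i = 0) (hg0 : ∀ i, l i = 0 → 0 ≤ g i) :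
    0 ≤ ∑ i, g i * ω i := by
  have h1 : ∀ᶠ t in nhdsWithin (0 : ℝ) (Set.Ioi 0), ∀ i, 0 ≤ l i + t * g i :=
    Filter.eventually_all.2 fun i => eventually_nonneg_add _ _ (hl i) (hg0 i)
  obtain ⟨t, ht, htpos⟩ := (h1.and self_mem_nhdsWithin).exists
  have h2 := hmin (fun i => l i + t * g i) ht (by
    simp only [add_smul, mul_smul, Finset.sum_add_distrib, ← Finset.smul_sum, hg]
    simp)
  simp only [add_mul, mul_assoc, Finset.sum_add_distrib, ← Finset.mul_sum] at h2
  exact nonneg_of_mul_nonneg_right (by linarith) htpos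

/-- The elementary relation expressing `u j` through the subfamily indexed by `B`. -/
theorem sum_elementary {M : Type*} [AddCommGroup M] [Module ℝ M] (u : ι → M) (B : Finset ι)
    (j : ι) (c : ι → ℝ) :
    ∑ i, ((if i = j then 1 else 0) - (if i ∈ B then c i else 0) : ℝ) • u i =
      u j - ∑ i ∈ B, c i • u i := by
  simp [sub_smul, ite_smul, Finset.sum_sub_distrib]

theorem exists_coeffs {v : ι → W} {B : Finset ι} {x : W}
    (h : x ∈ Submodule.span ℝ (v '' (B : Set ι))) : ∃ c : ι → ℝ, x = ∑ i ∈ B, c i • v i := by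
  obtain ⟨c, hc⟩ := (Submodule.mem_span_image_finset_iff_exists_fun ℝ).1 h
  refine ⟨fun i => if hi : i ∈ B then c ⟨i, hi⟩ else 0, ?_⟩
  rw [← hc, ← Finset.sum_coe_sort B]
  exact Finset.sum_congr rfl fun i _ => by simp

/-- The cells of the regular triangulation induced by the heights `ω`: bases among `v` whose
interpolating linear functional lies strictly below the remaining heights. -/
def IsCell (v : ι → W) (ω : ι → ℝ) (B : Finset ι) : Prop :=
  LinearIndepOn ℝ v (B : Set ι) ∧ Submodule.span ℝ (v '' (B : Set ι)) = ⊤ ∧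
    ∃ y : W →ₗ[ℝ] ℝ, (∀ i ∈ B, y (v i) = ω i) ∧ ∀ j ∉ B, y (v j) < ω j

/-- The basis of the ambient space given by a cell. -/
def IsCell.basis {v : ι → W} {ω : ι → ℝ} {B : Finset ι} (h : IsCell v ω B) :
    Module.Basis B ℝ W :=
  Module.Basis.mk (v := fun i : B => v i) h.1 (by
    rw [← h.2.1, show Set.range (fun i : B => v i) = v '' (B : Set ι) by ext; simp])

theorem IsCell.basis_apply {v : ι → W} {ω : ι → ℝ} {B : Finset ι} (h : IsCell v ω B) (i : B) :
    h.basis i = v i :=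
  Module.Basis.mk_apply _ _ i

/-- The expansion in the basis of a cell, extended by zero to the whole family of generators. -/
theorem IsCell.sum_repr {v : ι → W} {ω : ι → ℝ} {B : Finset ι} (h : IsCell v ω B) (x : W) :
    ∃ l : ι → ℝ, (∀ i : B, l i = h.basis.repr x i) ∧ (∀ i ∉ B, l i = 0) ∧
      x = ∑ i, l i • v i := by
  refine ⟨fun i => if hi : i ∈ B then h.basis.repr x ⟨i, hi⟩ else 0, fun i => by simp,
    fun i hi => by simp [hi], ?_⟩
  conv_lhs => rw [← h.basis.sum_repr x]
  rw [← Finset.sum_subset (Finset.subset_univ B) (fun i _ hi => by simp [hi]),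
    ← Finset.sum_coe_sort B]
  exact Finset.sum_congr rfl fun i _ => by simp [h.basis_apply]

theorem IsCell.inCone {v : ι → W} {ω : ι → ℝ} {B : Finset ι} (h : IsCell v ω B) {x : W}
    (hx : ∀ i, 0 ≤ h.basis.repr x i) : InCone v x := by
  obtain ⟨l, h1, h2, h3⟩ := h.sum_repr x
  refine ⟨l, fun i => ?_, h3⟩
  by_cases hi : i ∈ B
  · rw [h1 ⟨i, hi⟩]; exact hx _
  · rw [h2 i hi]

/-- A generic point of the cone lies in the open cone over some cell, namely the one supporting
the optimum of the linear program. -/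
theorem exists_cell {v : ι → W} (ht : W →ₗ[ℝ] ℝ) (hv : ∀ i, ht (v i) = 1) {ω : ι → ℝ}
    (hω : IsGenericHeight v ω) {x : W} (hx : InCone v x) (hgen : IsGeneric v x) :
    ∃ (B : Finset ι) (h : IsCell v ω B), ∀ i, 0 < h.basis.repr x i := by
  obtain ⟨l, hl, hxl, hmin⟩ := hx.exists_optimum ht hv ω
  rw [hxl] at hmin
  let A : Finset ι := Finset.univ.filter fun i => l i ≠ 0
  have hA : ∀ i, i ∈ A ↔ l i ≠ 0 := fun i => by simp [A]
  have hxA : x = ∑ i ∈ A, l i • v i := by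
    rw [hxl]
    refine (Finset.sum_subset (Finset.subset_univ A) fun i _ hi => ?_).symm
    rw [hA, not_not] at hi
    rw [hi, zero_smul]
  -- the support of the optimum is independent: otherwise an elementary relation on it could be
  -- followed in both directions, although its height is nonzero
  obtain ⟨B', hB'A, -, hspan, hli⟩ := exists_linearIndepOn_extension
    (linearIndepOn_empty ℝ v) (Set.empty_subset (A : Set ι))
  lift B' to Finset ι using (A.finite_toSet.subset hB'A)
  have hBA : A ⊆ B' := by
    intro j hj
    by_contra hjB
    obtain ⟨c, hc⟩ := exists_coeffs (hspan ⟨j, hj, rfl⟩)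
    have hne := hω B' hli j hjB c hc
    have e1 := sum_elementary v B' j c
    have e2 := sum_elementary ω B' j c
    rw [← hc, sub_self] at e1
    simp only [smul_eq_mul] at e2
    have hz : ∀ i, l i = 0 → i ≠ j ∧ i ∉ B' := by
      intro i hi
      refine ⟨?_, fun h => (hA i).1 (hB'A h) hi⟩
      rintro rfl
      exact (hA i).1 hj hi
    have h1 := optimum_direction hl hmin _ e1 (fun i hi => by simp [hz i hi])
    have h2 := optimum_direction hl hmin
      (fun i => -((if i = j then 1 else 0) - (if i ∈ B' then c i else 0) : ℝ))
      (by simp only [neg_smul, Finset.sum_neg_distrib, e1, neg_zero])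
      (fun i hi => by simp [hz i hi])
    simp only [neg_mul, Finset.sum_neg_distrib] at h2
    rw [e2] at h1 h2
    exact hne (by linarith)
  have hAli : LinearIndepOn ℝ v (A : Set ι) := hli.mono hBA
  have htop : Submodule.span ℝ (v '' (A : Set ι)) = ⊤ := by
    by_contra hne
    refine hgen A hne ?_
    rw [hxA]
    exact Submodule.sum_mem _ fun i hi =>
      Submodule.smul_mem _ _ (Submodule.subset_span ⟨i, hi, rfl⟩)
  have hcell : IsCell v ω A := by
    let b : Module.Basis A ℝ W := Module.Basis.mk (v := fun i : A => v i) hAli (by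
      rw [← htop, show Set.range (fun i : A => v i) = v '' (A : Set ι) by ext; simp])
    have hb : ∀ i : A, b i = v i := fun i => Module.Basis.mk_apply _ _ i
    have hy : ∀ i ∈ A, b.constr ℝ (fun i : A => ω i) (v i) = ω i := by
      intro i hi
      rw [← hb ⟨i, hi⟩, Module.Basis.constr_basis]
    refine ⟨hAli, htop, b.constr ℝ (fun i : A => ω i), hy, ?_⟩
    intro j hj
    obtain ⟨c, hc⟩ := exists_coeffs (v := v) (B := A) (x := v j) (by rw [htop]; trivial)
    have hne := hω A hAli j hj c hc
    have e1 := sum_elementary v A j c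
    have e2 := sum_elementary ω A j c
    rw [← hc, sub_self] at e1
    simp only [smul_eq_mul] at e2
    have h1 := optimum_direction hl hmin _ e1 (fun i hi => by
      have : i ∉ A := fun h => (hA i).1 h hi
      rw [if_neg this, sub_zero]
      split_ifs <;> norm_num)
    rw [e2] at h1
    rw [hc, map_sum]
    have : ∑ i ∈ A, b.constr ℝ (fun i : A => ω i) (c i • v i) = ∑ i ∈ A, c i * ω i :=
      Finset.sum_congr rfl fun i hi => by rw [map_smul, hy i hi, smul_eq_mul]
    rw [this]
    exact lt_of_le_of_ne (by linarith) hne.symm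
  refine ⟨A, hcell, fun i => ?_⟩
  have : hcell.basis.repr x = fun i : A => l i := by
    rw [← hcell.basis.repr_sum_self (fun i : A => l i)]
    congr 2
    rw [hxA, ← Finset.sum_coe_sort A]
    exact Finset.sum_congr rfl fun i _ => by rw [hcell.basis_apply]
  rw [this]
  exact lt_of_le_of_ne (hl i) ((hA i).1 i.2).symm

/-- Two cells whose open cones share a point are nested; by symmetry they coincide, so the open
cones over distinct cells are disjoint. -/
theorem IsCell.subset_of_common {v : ι → W} {ω : ι → ℝ} {B B' : Finset ι} (h : IsCell v ω B)
    (h' : IsCell v ω B') {x : W} (hx : ∀ i, 0 < h.basis.repr x i)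
    (hx' : ∀ i, 0 < h'.basis.repr x i) : B ⊆ B' := by
  obtain ⟨l, hl, hl0, hxl⟩ := h.sum_repr x
  -- weak duality: both cells compute the optimal height of `x`, so complementary slackness holds
  obtain ⟨m, hm, hm0, hxm⟩ := h'.sum_repr x
  have lnn : ∀ i, 0 ≤ l i := fun i => by
    by_cases hi : i ∈ B
    · rw [hl ⟨i, hi⟩]; exact (hx _).le
    · rw [hl0 i hi]
  have mnn : ∀ i, 0 ≤ m i := fun i => by
    by_cases hi : i ∈ B'
    · rw [hm ⟨i, hi⟩]; exact (hx' _).le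
    · rw [hm0 i hi]
  obtain ⟨y, hy, hylt⟩ := h.2.2
  obtain ⟨y', hy', hylt'⟩ := h'.2.2
  have le : ∀ i, 0 ≤ ω i - y (v i) := fun i => by
    by_cases hi : i ∈ B
    · rw [hy i hi, sub_self]
    · exact (sub_pos.2 (hylt i hi)).le
  have le' : ∀ i, 0 ≤ ω i - y' (v i) := fun i => by
    by_cases hi : i ∈ B'
    · rw [hy' i hi, sub_self]
    · exact (sub_pos.2 (hylt' i hi)).le
  have key : ∀ (z : W →ₗ[ℝ] ℝ) (a : ι → ℝ), x = ∑ i, a i • v i →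
      ∑ i, a i * (ω i - z (v i)) = ∑ i, a i * ω i - z x := by
    intro z a ha
    rw [ha, map_sum]
    simp [mul_sub, Finset.sum_sub_distrib]
  have k1 := key y l hxl
  have k2 := key y m hxm
  have k3 := key y' l hxl
  have k4 := key y' m hxm
  have z1 : ∑ i, l i * (ω i - y (v i)) = 0 := Finset.sum_eq_zero fun i _ => by
    by_cases hi : i ∈ B
    · rw [hy i hi]; ring
    · rw [hl0 i hi]; ring
  have z4 : ∑ i, m i * (ω i - y' (v i)) = 0 := Finset.sum_eq_zero fun i _ => by
    by_cases hi : i ∈ B'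
    · rw [hy' i hi]; ring
    · rw [hm0 i hi]; ring
  have n2 : 0 ≤ ∑ i, m i * (ω i - y (v i)) :=
    Finset.sum_nonneg fun i _ => mul_nonneg (mnn i) (le i)
  have n3 : ∀ i ∈ Finset.univ, 0 ≤ l i * (ω i - y' (v i)) :=
    fun i _ => mul_nonneg (lnn i) (le' i)
  have z3 : ∑ i, l i * (ω i - y' (v i)) = 0 := by
    have := Finset.sum_nonneg n3
    linarith
  intro i hi
  by_contra hi'
  have e := (Finset.sum_eq_zero_iff_of_nonneg n3).1 z3 i (Finset.mem_univ i)
  have p1 : 0 < l i := by rw [hl ⟨i, hi⟩]; exact hx _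
  exact (mul_pos p1 (sub_pos.2 (hylt' i hi'))).ne' e

theorem eventually_add_smul_notMem {H : Submodule ℝ W} {u : W} (hu : u ∉ H) (x : W) :
    ∀ᶠ ε in nhdsWithin (0 : ℝ) (Set.Ioi 0), x + ε • u ∉ H := by
  by_cases hbad : ∃ a : ℝ, 0 < a ∧ x + a • u ∈ H
  · obtain ⟨a, ha, hxa⟩ := hbad
    filter_upwards [Ioo_mem_nhdsGT ha] with ε hε hmem
    refine hu ?_
    have h1 : (a - ε) • u ∈ H := by
      have := H.sub_mem hxa hmem
      rwa [add_sub_add_left_eq_sub, ← sub_smul] at this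
    exact (H.smul_mem_iff (sub_pos.2 hε.2).ne').1 h1
  · push Not at hbad
    filter_upwards [self_mem_nhdsWithin] with ε hε using hbad ε hε

theorem IsGeneric.eventually_add {v : ι → W} {u : W} (hu : IsGeneric v u) (x : W) :
    ∀ᶠ ε in nhdsWithin (0 : ℝ) (Set.Ioi 0), IsGeneric v (x + ε • u) := by
  refine Filter.eventually_all.2 fun B => ?_
  by_cases hB : Submodule.span ℝ (v '' (B : Set ι)) = ⊤
  · exact Filter.Eventually.of_forall fun ε h => (h hB).elim
  · exact (eventually_add_smul_notMem (hu B hB) x).mono fun ε h _ => h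

theorem IsGeneric.neg {v : ι → W} {u : W} (hu : IsGeneric v u) : IsGeneric v (-u) :=
  fun B hB h => hu B hB (by simpa using h)

theorem exists_isGeneric (v : ι → W) : ∃ u : W, IsGeneric v u := by
  let I := {B : Finset ι // Submodule.span ℝ (v '' (B : Set ι)) ≠ ⊤}
  let H : I → Subspace ℝ W := fun B => Submodule.span ℝ (v '' (B.1 : Set ι))
  have hne : ⋃ a, (H a : Set W) ≠ Set.univ := by
    intro hu
    obtain ⟨a, ha⟩ := Subspace.exists_eq_top_of_iUnion_eq_univ hu
    exact a.2 ha
  obtain ⟨u, hu⟩ := (Set.ne_univ_iff_exists_notMem _).1 hne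
  exact ⟨u, fun B hB h => hu (Set.mem_iUnion.2 ⟨⟨B, hB⟩, h⟩)⟩

/-- A generic vector in the relative interior of the cone. -/
theorem exists_isGeneric_interior {v : ι → W} (hspan : Submodule.span ℝ (Set.range v) = ⊤) :
    ∃ (w : W) (μ : ι → ℝ), IsGeneric v w ∧ (∀ i, 0 < μ i) ∧ w = ∑ i, μ i • v i := by
  obtain ⟨u, hu⟩ := exists_isGeneric v
  obtain ⟨a, ha⟩ := (Submodule.mem_span_range_iff_exists_fun ℝ).1
    (show u ∈ Submodule.span ℝ (Set.range v) by rw [hspan]; trivial)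
  have hpos : ∀ᶠ ε in nhdsWithin (0 : ℝ) (Set.Ioi 0), ∀ i, 0 ≤ 1 / 2 + ε * a i :=
    Filter.eventually_all.2 fun i => eventually_nonneg_add _ _ (by norm_num)
      (fun h => by norm_num at h)
  obtain ⟨ε, h1, h2⟩ := (hpos.and (hu.eventually_add (∑ i, v i))).exists
  refine ⟨_, fun i => 1 + ε * a i, h2, fun i => by linarith [h1 i], ?_⟩
  simp only [add_smul, one_smul, mul_smul, Finset.sum_add_distrib, ← Finset.smul_sum, ha]

theorem eventually_pos_iff_inRay (c o : ℝ) :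
    ∀ᶠ ε in nhdsWithin (0 : ℝ) (Set.Ioi 0), (0 < c + ε * o ↔ InRay (0 < o) c) := by
  have hlim : Filter.Tendsto (fun t : ℝ => c + t * o) (nhdsWithin 0 (Set.Ioi 0)) (nhds c) := by
    have : Filter.Tendsto (fun t : ℝ => c + t * o) (nhds 0) (nhds (c + 0 * o)) :=
      (continuous_const.add (continuous_id.mul continuous_const)).tendsto 0
    rw [zero_mul, add_zero] at this
    exact this.mono_left nhdsWithin_le_nhds
  rcases lt_trichotomy c 0 with h | h | h
  · filter_upwards [hlim.eventually_lt_const h] with ε hε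
    refine iff_of_false hε.not_gt ?_
    rintro (h' | h')
    · exact h.not_gt h'
    · exact h.ne h'.1
  · filter_upwards [self_mem_nhdsWithin] with ε hε
    rw [h, zero_add, mul_pos_iff_of_pos_left hε]
    simp [InRay]
  · filter_upwards [hlim.eventually_const_lt h] with ε hε
    exact iff_of_true hε (Or.inl h)

theorem IsCell.repr_ne_zero {v : ι → W} {ω : ι → ℝ} {B : Finset ι} (h : IsCell v ω B) {u : W}
    (hu : IsGeneric v u) (i : B) : h.basis.repr u i ≠ 0 := by
  intro h0
  have hle : Submodule.span ℝ (v '' ((B.erase i : Finset ι) : Set ι)) ≤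
      LinearMap.ker (h.basis.coord i) := by
    rw [Submodule.span_le]
    rintro _ ⟨j, hj, rfl⟩
    rw [Finset.mem_coe, Finset.mem_erase] at hj
    have : v j = h.basis ⟨j, hj.2⟩ := (h.basis_apply ⟨j, hj.2⟩).symm
    rw [SetLike.mem_coe, LinearMap.mem_ker, this, Module.Basis.coord_apply,
      Module.Basis.repr_self, Finsupp.single_eq_of_ne]
    intro e
    exact hj.1 (congrArg Subtype.val e).symm
  refine hu (B.erase i) (fun htop => ?_) ?_
  · rw [htop, top_le_iff] at hle
    have h1 : h.basis i ∈ LinearMap.ker (h.basis.coord i) := by rw [hle]; trivial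
    rw [LinearMap.mem_ker, Module.Basis.coord_apply, Module.Basis.repr_self,
      Finsupp.single_eq_same] at h1
    exact one_ne_zero h1
  · rw [← h.basis.sum_repr u]
    refine Submodule.sum_mem _ fun j _ => ?_
    by_cases hj : j = i
    · rw [hj, h0, zero_smul]
      exact Submodule.zero_mem _
    · rw [h.basis_apply]
      refine Submodule.smul_mem _ _ (Submodule.subset_span ⟨j, ?_, rfl⟩)
      rw [Finset.mem_coe, Finset.mem_erase]
      exact ⟨fun e => hj (Subtype.ext e), j.2⟩

/-- Pushing `x` slightly in a direction `u` moves it into the open cone over a cell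
exactly when `x` lies in the half-open cone determined by the signs of `u`. -/
theorem IsCell.eventually_iff {v : ι → W} {ω : ι → ℝ} {B : Finset ι} (h : IsCell v ω B)
    (u x : W) :
    ∀ᶠ ε in nhdsWithin (0 : ℝ) (Set.Ioi 0), ((∀ i, 0 < h.basis.repr (x + ε • u) i) ↔
      x ∈ halfOpenCone h.basis (fun i => 0 < h.basis.repr u i)) := by
  have : ∀ᶠ ε in nhdsWithin (0 : ℝ) (Set.Ioi 0), ∀ i,
      (0 < h.basis.repr x i + ε * h.basis.repr u i ↔
        InRay (0 < h.basis.repr u i) (h.basis.repr x i)) :=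
    Filter.eventually_all.2 fun i => eventually_pos_iff_inRay _ _
  filter_upwards [this] with ε hε
  simp only [halfOpenCone, Set.mem_ofPred_eq]
  refine forall_congr' fun i => ?_
  rw [← hε i]
  simp

theorem IsCell.eq_of_mem {v : ι → W} {ω : ι → ℝ} {B B' : Finset ι} (h : IsCell v ω B)
    (h' : IsCell v ω B') {u x : W}
    (hx : x ∈ halfOpenCone h.basis (fun i => 0 < h.basis.repr u i))
    (hx' : x ∈ halfOpenCone h'.basis (fun i => 0 < h'.basis.repr u i)) : B = B' := by
  obtain ⟨ε, h1, h2⟩ := ((h.eventually_iff u x).and (h'.eventually_iff u x)).exists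
  exact (h.subset_of_common h' (h1.2 hx) (h2.2 hx')).antisymm
    (h'.subset_of_common h (h2.2 hx') (h1.2 hx))

theorem exists_cell_of_eventually {v : ι → W} (ht : W →ₗ[ℝ] ℝ) (hv : ∀ i, ht (v i) = 1)
    {ω : ι → ℝ} (hω : IsGenericHeight v ω) {u x : W} (hu : IsGeneric v u)
    (hx : ∀ᶠ ε in nhdsWithin (0 : ℝ) (Set.Ioi 0), InCone v (x + ε • u)) :
    ∃ (B : Finset ι) (h : IsCell v ω B),
      x ∈ halfOpenCone h.basis (fun i => 0 < h.basis.repr u i) := by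
  have hall : ∀ᶠ ε in nhdsWithin (0 : ℝ) (Set.Ioi 0), ∀ B : {B : Finset ι // IsCell v ω B},
      ((∀ i, 0 < B.2.basis.repr (x + ε • u) i) ↔
        x ∈ halfOpenCone B.2.basis (fun i => 0 < B.2.basis.repr u i)) :=
    Filter.eventually_all.2 fun B => B.2.eventually_iff u x
  obtain ⟨ε, h1, h2, h3⟩ := (hx.and ((hu.eventually_add x).and hall)).exists
  obtain ⟨B, hB, hpos⟩ := exists_cell ht hv hω h1 h2
  exact ⟨B, hB, (h3 ⟨B, hB⟩).1 hpos⟩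

/-- The signs of `-u` are opposite to those of `u`. -/
theorem IsCell.halfOpenCone_neg {v : ι → W} {ω : ι → ℝ} {B : Finset ι} (h : IsCell v ω B) {u : W}
    (hu : IsGeneric v u) :
    halfOpenCone h.basis (fun i => 0 < h.basis.repr (-u) i) =
      halfOpenCone h.basis (fun i => ¬ 0 < h.basis.repr u i) := by
  congr 1
  funext i
  have := h.repr_ne_zero hu i
  rw [map_neg, Finsupp.neg_apply, neg_pos, not_lt, eq_iff_iff]
  exact ⟨le_of_lt, fun h => lt_of_le_of_ne h this⟩

/-- The cone over `v`, and likewise its interior, is a disjoint union of half-open simplicial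
cones, the two decompositions being obtained from each other by switching which facets are
included. -/
theorem exists_decomposition (v : ι → W) (ht : W →ₗ[ℝ] ℝ) (hv : ∀ i, ht (v i) = 1)
    (hspan : Submodule.span ℝ (Set.range v) = ⊤) :
    ∃ (T : Set (Finset ι)) (b : ∀ B : T, Module.Basis B.1 ℝ W) (σ : ∀ B : T, B.1 → Prop),
      (∀ B i, b B i = v i) ∧
      (∀ x, InCone v x ↔ ∃ B, x ∈ halfOpenCone (b B) (σ B)) ∧
      (∀ x, (∃ l : ι → ℝ, (∀ i, 0 < l i) ∧ x = ∑ i, l i • v i) ↔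
        ∃ B, x ∈ halfOpenCone (b B) (fun i => ¬ σ B i)) ∧
      (Pairwise fun B B' => Disjoint (halfOpenCone (b B) (σ B)) (halfOpenCone (b B') (σ B'))) ∧
      (Pairwise fun B B' => Disjoint (halfOpenCone (b B) (fun i => ¬ σ B i))
        (halfOpenCone (b B') (fun i => ¬ σ B' i))) := by
  obtain ⟨ω, hω⟩ := exists_isGenericHeight v
  obtain ⟨w, μ, hw, hμ, hwμ⟩ := exists_isGeneric_interior hspan
  refine ⟨{B | IsCell v ω B}, fun B => IsCell.basis B.2,
    fun B i => 0 < (IsCell.basis B.2).repr w i, fun B i => IsCell.basis_apply B.2 i, ?_, ?_, ?_, ?_⟩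
  · intro x
    constructor
    · rintro ⟨l, hl, hxl⟩
      obtain ⟨B, h, hx⟩ := exists_cell_of_eventually ht hv hω hw (x := x) (by
        filter_upwards [self_mem_nhdsWithin] with ε hε
        refine ⟨fun i => l i + ε * μ i,
          fun i => add_nonneg (hl i) (mul_nonneg (le_of_lt hε) (hμ i).le), ?_⟩
        rw [hxl, hwμ]
        simp only [add_smul, mul_smul, Finset.sum_add_distrib, ← Finset.smul_sum])
      exact ⟨⟨B, h⟩, hx⟩
    · rintro ⟨B, hx⟩
      refine IsCell.inCone B.2 fun i => ?_
      rcases hx i with h | h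
      · exact h.le
      · exact h.1.ge
  · intro x
    constructor
    · rintro ⟨l, hl, hxl⟩
      obtain ⟨B, h, hx⟩ := exists_cell_of_eventually ht hv hω hw.neg (x := x) (by
        have : ∀ᶠ ε in nhdsWithin (0 : ℝ) (Set.Ioi 0), ∀ i, 0 ≤ l i + ε * (-μ i) :=
          Filter.eventually_all.2 fun i => eventually_nonneg_add _ _ (hl i).le
            (fun h => ((hl i).ne' h).elim)
        filter_upwards [this] with ε hε
        refine ⟨fun i => l i + ε * (-μ i), hε, ?_⟩
        rw [hxl, hwμ]
        simp only [add_smul, mul_smul, neg_smul, Finset.sum_add_distrib, ← Finset.smul_sum,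
          Finset.sum_neg_distrib])
      rw [h.halfOpenCone_neg hw] at hx
      exact ⟨⟨B, h⟩, hx⟩
    · rintro ⟨⟨B, h⟩, hx⟩
      rw [← IsCell.halfOpenCone_neg h hw] at hx
      obtain ⟨ε, h1, h2⟩ := ((h.eventually_iff (-w) x).and self_mem_nhdsWithin).exists
      obtain ⟨l, hl, hxl⟩ := h.inCone fun i => (h1.2 hx i).le
      refine ⟨fun i => l i + ε * μ i,
        fun i => add_pos_of_nonneg_of_pos (hl i) (mul_pos h2 (hμ i)), ?_⟩
      simp only [add_smul, mul_smul, Finset.sum_add_distrib, ← Finset.smul_sum, ← hxl, ← hwμ]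
      simp
  · rintro ⟨B, h⟩ ⟨B', h'⟩ hne
    refine Set.disjoint_left.2 fun x hx hx' => hne (Subtype.ext ?_)
    exact IsCell.eq_of_mem h h' hx hx'
  · rintro ⟨B, h⟩ ⟨B', h'⟩ hne
    refine Set.disjoint_left.2 fun x hx hx' => hne (Subtype.ext ?_)
    rw [← IsCell.halfOpenCone_neg h hw] at hx
    rw [← IsCell.halfOpenCone_neg h' hw] at hx'
    exact IsCell.eq_of_mem h h' hx hx'

end Decomposition

/-! ### Convex hulls and relative interiors -/

section Polytope

variable {ι E : Type*} [Fintype ι] [NormedAddCommGroup E] [NormedSpace ℝ E]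

theorem mem_convexHull_range_iff (u : ι → E) (x : E) :
    x ∈ convexHull ℝ (Set.range u) ↔
      ∃ l : ι → ℝ, (∀ i, 0 ≤ l i) ∧ ∑ i, l i = 1 ∧ x = ∑ i, l i • u i := by
  constructor
  · intro hx
    have hsub : convexHull ℝ (Set.range u) ⊆
        {x | ∃ l : ι → ℝ, (∀ i, 0 ≤ l i) ∧ ∑ i, l i = 1 ∧ x = ∑ i, l i • u i} := by
      refine convexHull_min ?_ ?_
      · rintro _ ⟨i, rfl⟩
        exact ⟨Pi.single i 1, fun j => by by_cases h : j = i <;> simp [h],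
          by simp, by simp [Pi.single_apply, ite_smul]⟩
      · rintro _ ⟨l, hl, hl1, rfl⟩ _ ⟨m, hm, hm1, rfl⟩ a b ha hb hab
        refine ⟨fun i => a * l i + b * m i,
          fun i => add_nonneg (mul_nonneg ha (hl i)) (mul_nonneg hb (hm i)), ?_, ?_⟩
        · rw [Finset.sum_add_distrib, ← Finset.mul_sum, ← Finset.mul_sum, hl1, hm1]
          linarith
        · simp only [add_smul, mul_smul, Finset.sum_add_distrib, ← Finset.smul_sum]
    exact hsub hx
  · rintro ⟨l, hl, hl1, hx⟩
    exact mem_convexHull_of_exists_fintype l u hl hl1 (fun i => ⟨i, rfl⟩) hx.symm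

theorem mem_intrinsicInterior_iff_dist (s : Set E) (x : E) :
    x ∈ intrinsicInterior ℝ s ↔ x ∈ affineSpan ℝ s ∧
      ∃ δ > 0, ∀ y ∈ affineSpan ℝ s, dist y x < δ → y ∈ s := by
  rw [mem_intrinsicInterior]
  constructor
  · rintro ⟨y, hy, rfl⟩
    rw [mem_interior_iff_mem_nhds, Metric.mem_nhds_iff] at hy
    obtain ⟨δ, hδ, hsub⟩ := hy
    exact ⟨y.2, δ, hδ, fun z hz hd => hsub (show (⟨z, hz⟩ : affineSpan ℝ s) ∈ _ from hd)⟩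
  · rintro ⟨hx, δ, hδ, h⟩
    refine ⟨⟨x, hx⟩, ?_, rfl⟩
    rw [mem_interior_iff_mem_nhds, Metric.mem_nhds_iff]
    exact ⟨δ, hδ, fun z hz => h z z.2 hz⟩

theorem add_smul_sub_mem {s : AffineSubspace ℝ E} {x z p : E} (hx : x ∈ s) (hz : z ∈ s)
    (hp : p ∈ s) (t : ℝ) : z + t • (p - x) ∈ s := by
  have := s.smul_vsub_vadd_mem t hp hx hz
  rwa [vsub_eq_sub, vadd_eq_add, add_comm] at this

/-- The relative interior of a polytope consists of the convex combinations of its generators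
with all coefficients positive. -/
theorem mem_intrinsicInterior_convexHull_iff [FiniteDimensional ℝ E] [Nonempty ι] (u : ι → E)
    (x : E) :
    x ∈ intrinsicInterior ℝ (convexHull ℝ (Set.range u)) ↔
      ∃ l : ι → ℝ, (∀ i, 0 < l i) ∧ ∑ i, l i = 1 ∧ x = ∑ i, l i • u i := by
  set P := convexHull ℝ (Set.range u) with hP
  constructor
  · intro hx
    obtain ⟨hxs, δ, hδ, h⟩ := (mem_intrinsicInterior_iff_dist _ _).1 hx
    let N : ℝ := Fintype.card ι
    have hN : 0 < N := Nat.cast_pos.2 Fintype.card_pos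
    let c : E := ∑ i, N⁻¹ • u i
    have hc : c ∈ P := (mem_convexHull_range_iff _ _).2 ⟨fun _ => N⁻¹,
      fun _ => (inv_pos.2 hN).le, by simp [N], rfl⟩
    -- move from `x` slightly away from the barycentre `c`
    let ε : ℝ := δ / (2 * (‖x - c‖ + 1))
    have hn : 0 < 2 * (‖x - c‖ + 1) := by positivity
    have hε : 0 < ε := div_pos hδ hn
    have hmem : x + ε • (x - c) ∈ P := by
      refine h _ (add_smul_sub_mem (subset_affineSpan _ _ hc) hxs hxs ε) ?_
      rw [dist_eq_norm, add_sub_cancel_left, norm_smul, Real.norm_of_nonneg hε.le]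
      have : ε * (2 * (‖x - c‖ + 1)) = δ := div_mul_cancel₀ _ hn.ne'
      nlinarith [norm_nonneg (x - c)]
    obtain ⟨l, hl, hl1, hxl⟩ := (mem_convexHull_range_iff _ _).1 hmem
    have h1ε : 0 < 1 + ε := by linarith
    refine ⟨fun i => (1 + ε)⁻¹ * (l i + ε * N⁻¹), fun i => mul_pos (inv_pos.2 h1ε)
      (add_pos_of_nonneg_of_pos (hl i) (mul_pos hε (inv_pos.2 hN))), ?_, ?_⟩
    · rw [← Finset.mul_sum, Finset.sum_add_distrib, hl1]
      have : ∑ _i : ι, ε * N⁻¹ = ε := by simp [N]; field_simp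
      rw [this]
      exact inv_mul_cancel₀ h1ε.ne'
    · have hε1 : (1 + ε) • x = ∑ i, l i • u i + ε • c := by
        rw [← hxl]
        module
      simp only [mul_smul, add_smul, Finset.sum_add_distrib, ← Finset.smul_sum]
      rw [eq_inv_smul_iff₀ h1ε.ne', hε1]
      simp only [c, Finset.smul_sum]
  · rintro ⟨l, hl, hl1, hxl⟩
    have hxP : x ∈ P := (mem_convexHull_range_iff _ _).2 ⟨l, fun i => (hl i).le, hl1, hxl⟩
    obtain ⟨z, hz⟩ := Set.Nonempty.intrinsicInterior (convex_convexHull ℝ (Set.range u)) ⟨x, hxP⟩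
    obtain ⟨hzs, δ, hδ, h⟩ := (mem_intrinsicInterior_iff_dist _ _).1 hz
    obtain ⟨m, hm, hm1, hzm⟩ := (mem_convexHull_range_iff _ _).1 (intrinsicInterior_subset hz)
    have hev : ∀ᶠ t in nhdsWithin (0 : ℝ) (Set.Ioi 0), ∀ i, 0 ≤ l i + t * (-m i) :=
      Filter.eventually_all.2 fun i => eventually_nonneg_add _ _ (hl i).le
        (fun h => ((hl i).ne' h).elim)
    obtain ⟨t, ht, htpos⟩ := (hev.and self_mem_nhdsWithin).exists
    have ht0 : 0 < t := htpos
    refine (mem_intrinsicInterior_iff_dist _ _).2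
      ⟨subset_affineSpan _ _ hxP, t * δ, mul_pos ht0 hδ, fun p hp hd => ?_⟩
    -- a small displacement of `x` is `t` times an admissible displacement of `z`
    have hz' : z + t⁻¹ • (p - x) ∈ P := by
      refine h _ (add_smul_sub_mem (subset_affineSpan _ _ hxP) hzs hp t⁻¹) ?_
      rw [dist_eq_norm] at hd
      rw [dist_eq_norm, add_sub_cancel_left, norm_smul, Real.norm_of_nonneg (inv_pos.2 ht0).le,
        inv_mul_lt_iff₀ ht0]
      exact hd
    obtain ⟨m', hm', hm1', hzm'⟩ := (mem_convexHull_range_iff _ _).1 hz'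
    refine (mem_convexHull_range_iff _ _).2 ⟨fun i => l i + t * (-m i) + t * m' i,
      fun i => add_nonneg (ht i) (mul_nonneg ht0.le (hm' i)), ?_, ?_⟩
    · simp only [Finset.sum_add_distrib, ← Finset.mul_sum, Finset.sum_neg_distrib, hl1, hm1, hm1']
      ring
    · simp only [add_smul, mul_smul, neg_smul, Finset.sum_add_distrib, ← Finset.smul_sum,
        Finset.sum_neg_distrib, ← hxl, ← hzm, ← hzm']
      rw [smul_add, smul_inv_smul₀ ht0.ne']
      module

end Polytope

/-! ### Homogenization and conclusion -/

section Assembly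

theorem finsum_split {W T : Type*} [Fintype T] (A : W → Prop) (C : W → Prop) (K : T → Set W)
    (hC : ∀ x, C x ↔ ∃ B, x ∈ K B) (hdisj : Pairwise fun B B' => Disjoint (K B) (K B'))
    (hfin : ∀ B, {x | A x ∧ x ∈ K B}.Finite) (f : W → ℂ) :
    ∑ᶠ x ∈ {x | A x ∧ C x}, f x = ∑ B, ∑ᶠ x ∈ {x | A x ∧ x ∈ K B}, f x := by
  have e : {x | A x ∧ C x} = ⋃ B, {x | A x ∧ x ∈ K B} := by
    ext x
    simp only [Set.mem_iUnion, Set.mem_ofPred_eq, hC, exists_and_left]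
  rw [e, finsum_mem_iUnion _ hfin, finsum_eq_sum_of_fintype]
  intro B B' hne
  exact (hdisj hne).mono (fun x hx => hx.2) fun x hx => hx.2

/-- Reciprocity for the cone generated by lattice vectors `v` of height one and its relative
interior, obtained by summing over a half-open decomposition. -/
theorem exists_cone_poly {ι W : Type*} [Fintype ι] [AddCommGroup W] [Module ℝ W]
    (k d : ℕ) (hk : Module.finrank ℝ W = k + 1) (v : ι → W)
    (hspan : Submodule.span ℝ (Set.range v) = ⊤)
    (ht : W →ₗ[ℝ] ℝ) (hv : ∀ i, ht (v i) = 1)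
    (Λ : AddSubgroup W) (hvΛ : ∀ i, v i ∈ Λ) (hint : ∀ x ∈ Λ, ∃ z : ℤ, ht x = z)
    (hfin : ∀ (B : Finset ι) (b : Module.Basis B ℝ W),
      {x | x ∈ Λ ∧ ∀ i, 0 ≤ b.repr x i ∧ b.repr x i ≤ 1}.Finite)
    (f : W → ℂ) (hneg : ∀ x, f (-x) = (-1) ^ d * f x)
    (hpoly : ∀ (B : Finset ι) (a : B → W) (y : W), ∃ p : MvPolynomial B ℂ, p.totalDegree ≤ d ∧
      ∀ c : B → ℝ, f (y + ∑ i, c i • a i) = MvPolynomial.eval (fun i => (c i : ℂ)) p) :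
    ∃ D : ℂ[X], D.natDegree ≤ d + k ∧ ∀ q : ℕ, 0 < q →
      ∑ᶠ x ∈ {x | (x ∈ Λ ∧ ht x = q) ∧ InCone v x}, f x = D.eval (q : ℂ) ∧
      (-1) ^ (d + k) * ∑ᶠ x ∈ {x | (x ∈ Λ ∧ ht x = q) ∧
        ∃ l : ι → ℝ, (∀ i, 0 < l i) ∧ x = ∑ i, l i • v i}, f x = D.eval (-(q : ℂ)) := by
  obtain ⟨T, b, σ, hb, hC, hI, hCd, hId⟩ := exists_decomposition v ht hv hspan
  have key := fun B : T => exists_halfOpenCone_poly k d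
    (by rw [← Module.finrank_eq_card_basis (b B), hk]) (b B) ht
    (fun i => by rw [hb, hv]) Λ (fun i => by rw [hb]; exact hvΛ _) hint (hfin _ (b B)) f hneg
    (hpoly _ (b B)) (σ B)
  choose F hdeg hF using key
  have : Fintype T := Fintype.ofFinite T
  refine ⟨∑ B, F B, Polynomial.natDegree_sum_le_of_forall_le _ _ fun B _ => hdeg B,
    fun q hq => ⟨?_, ?_⟩⟩
  · rw [finsum_split _ _ _ hC hCd, Polynomial.eval_finsetSum]
    · refine Finset.sum_congr rfl fun B _ => ?_
      rw [← (hF B q hq).1.2]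
      simp only [and_assoc]
    · intro B
      simpa only [and_assoc] using (hF B q hq).1.1
  · rw [finsum_split _ _ _ hI hId, Polynomial.eval_finsetSum, Finset.mul_sum]
    · refine Finset.sum_congr rfl fun B _ => ?_
      rw [← (hF B q hq).2.2]
      simp only [and_assoc]
    · intro B
      simpa only [and_assoc] using (hF B q hq).2.1

/-- Substituting affine forms into a polynomial does not raise the total degree. -/
theorem exists_affine_subst {κ : Type*} [Fintype κ] {n : ℕ} (p : MvPolynomial (Fin n) ℂ)
    (y : Fin n → ℝ) (a : κ → Fin n → ℝ) :
    ∃ p' : MvPolynomial κ ℂ, p'.totalDegree ≤ p.totalDegree ∧ ∀ c : κ → ℝ,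
      MvPolynomial.eval (fun j => (((y + ∑ i, c i • a i) j : ℝ) : ℂ)) p =
        MvPolynomial.eval (fun i => (c i : ℂ)) p' := by
  let g : Fin n → MvPolynomial κ ℂ := fun j =>
    MvPolynomial.C (y j : ℂ) + ∑ i, MvPolynomial.C (a i j : ℂ) * MvPolynomial.X i
  have hg : ∀ j, (g j).totalDegree ≤ 1 := by
    intro j
    refine (MvPolynomial.totalDegree_add _ _).trans (max_le ?_ ?_)
    · rw [MvPolynomial.totalDegree_C]; exact zero_le_one
    · refine MvPolynomial.totalDegree_finsetSum_le fun i _ => ?_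
      refine (MvPolynomial.totalDegree_mul _ _).trans ?_
      rw [MvPolynomial.totalDegree_C, MvPolynomial.totalDegree_X]
  refine ⟨MvPolynomial.eval₂ MvPolynomial.C g p, ?_, fun c => ?_⟩
  · rw [MvPolynomial.eval₂_eq]
    refine MvPolynomial.totalDegree_finsetSum_le fun m hm => ?_
    refine (MvPolynomial.totalDegree_mul _ _).trans ?_
    rw [MvPolynomial.totalDegree_C, zero_add]
    refine (MvPolynomial.totalDegree_finsetProd _ _).trans
      (le_trans (Finset.sum_le_sum fun i _ => ?_) (MvPolynomial.le_totalDegree hm))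
    refine (MvPolynomial.totalDegree_pow _ _).trans ?_
    exact (Nat.mul_le_mul_left _ (hg i)).trans (mul_one _).le
  · rw [MvPolynomial.eval₂_eq, MvPolynomial.eval_eq, map_sum]
    refine Finset.sum_congr rfl fun m _ => ?_
    rw [map_mul, MvPolynomial.eval_C, map_prod]
    congr 1
    refine Finset.prod_congr rfl fun j _ => ?_
    rw [map_pow]
    congr 1
    simp [g, mul_comm]

theorem eval_neg_of_isHomogeneous {n d : ℕ} {p : MvPolynomial (Fin n) ℂ} (hp : p.IsHomogeneous d)
    (x : Fin n → ℂ) :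
    MvPolynomial.eval (fun j => -x j) p = (-1) ^ d * MvPolynomial.eval x p := by
  rw [MvPolynomial.eval_eq, MvPolynomial.eval_eq, Finset.mul_sum]
  refine Finset.sum_congr rfl fun m hm => ?_
  have hd : m.degree = d := by
    rw [Finsupp.degree_eq_weight_one]
    exact hp (MvPolynomial.mem_support_iff.1 hm)
  have : ∏ i ∈ m.support, (-x i) ^ m i = (-1) ^ d * ∏ i ∈ m.support, x i ^ m i := by
    rw [← hd, Finsupp.degree_apply, ← Finset.prod_pow_eq_pow_sum, ← Finset.prod_mul_distrib]
    exact Finset.prod_congr rfl fun i _ => by rw [neg_pow]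
  rw [this]
  ring

/-- The cone over a set of affine dimension `k` spans a space of dimension `k + 1`. -/
theorem finrank_span_homogenization {ι E : Type*} [AddCommGroup E] [Module ℝ E]
    [FiniteDimensional ℝ E] [Nonempty ι] (u : ι → E) :
    Module.finrank ℝ (Submodule.span ℝ (Set.range fun i => (u i, (1 : ℝ)))) =
      Module.finrank ℝ (vectorSpan ℝ (Set.range u)) + 1 := by
  obtain ⟨i₀⟩ := ‹Nonempty ι›
  let V := vectorSpan ℝ (Set.range u)
  let W := Submodule.span ℝ (Set.range fun i => (u i, (1 : ℝ)))
  have hv : ∀ i, (u i, (1 : ℝ)) ∈ W := fun i => Submodule.subset_span ⟨i, rfl⟩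
  -- the shear `(x, t) ↦ (x + t u₀, t)` carries `V × ℝ` onto `W`
  let j : V × ℝ →ₗ[ℝ] E × ℝ :=
    (V.subtype.comp (LinearMap.fst ℝ V ℝ) + (LinearMap.snd ℝ V ℝ).smulRight (u i₀)).prod
      (LinearMap.snd ℝ V ℝ)
  have hj : ∀ x t, j (x, t) = ((x : E) + t • u i₀, t) := fun x t => rfl
  have hinj : Function.Injective j := by
    rintro ⟨x, t⟩ ⟨x', t'⟩ h
    rw [hj, hj, Prod.mk.injEq] at h
    obtain ⟨h1, rfl⟩ := h
    rw [add_left_inj] at h1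
    rw [Subtype.ext h1]
  have hrange : LinearMap.range j = W := by
    apply le_antisymm
    · rintro _ ⟨⟨x, t⟩, rfl⟩
      have hle : V ≤ W.comap (LinearMap.inl ℝ E ℝ) := by
        change vectorSpan ℝ (Set.range u) ≤ _
        rw [vectorSpan_range_eq_span_range_vsub_right ℝ u i₀, Submodule.span_le]
        rintro _ ⟨i, rfl⟩
        have := W.sub_mem (hv i) (hv i₀)
        simpa using this
      have h1 : ((x : E), (0 : ℝ)) ∈ W := hle x.2
      have h2 := W.add_mem h1 (W.smul_mem t (hv i₀))
      rw [hj]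
      simpa using h2
    · refine Submodule.span_le.2 ?_
      rintro _ ⟨i, rfl⟩
      refine ⟨(⟨u i - u i₀, vsub_mem_vectorSpan ℝ ⟨i, rfl⟩ ⟨i₀, rfl⟩⟩, 1), ?_⟩
      rw [hj]
      simp
  change Module.finrank ℝ W = Module.finrank ℝ V + 1
  rw [← hrange, LinearMap.finrank_range_of_inj hinj, Module.finrank_prod, Module.finrank_self]

/-- The lattice of integer points in a subspace of `ℝⁿ × ℝ`. -/
def latticeIn {n : ℕ} (W : Submodule ℝ ((Fin n → ℝ) × ℝ)) : AddSubgroup W where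
  carrier := {x | (∃ m : Fin n → ℤ, x.1.1 = intVec m) ∧ ∃ z : ℤ, x.1.2 = z}
  zero_mem' := ⟨⟨0, by ext; simp [intVec]⟩, 0, by simp⟩
  add_mem' := by
    rintro x y ⟨⟨m, hm⟩, z, hz⟩ ⟨⟨m', hm'⟩, z', hz'⟩
    exact ⟨⟨m + m', by ext i; simp [hm, hm', intVec]⟩, z + z', by simp [hz, hz']⟩
  neg_mem' := by
    rintro x ⟨⟨m, hm⟩, z, hz⟩
    exact ⟨⟨-m, by ext i; simp [hm, intVec]⟩, -z, by simp [hz]⟩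

theorem finite_box_inter_latticeIn {n : ℕ} {κ : Type*} [Fintype κ]
    (W : Submodule ℝ ((Fin n → ℝ) × ℝ)) (b : Module.Basis κ ℝ W) :
    {x | x ∈ latticeIn W ∧ ∀ i, 0 ≤ b.repr x i ∧ b.repr x i ≤ 1}.Finite := by
  obtain ⟨M, hM⟩ := exists_nat_ge (∑ i, ‖b i‖)
  have hbound : ∀ x : W, (∀ i, 0 ≤ b.repr x i ∧ b.repr x i ≤ 1) → ‖x‖ ≤ M := by
    intro x hx
    refine le_trans ?_ hM
    conv_lhs => rw [← b.sum_repr x]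
    refine (norm_sum_le _ _).trans (Finset.sum_le_sum fun i _ => ?_)
    rw [norm_smul, Real.norm_of_nonneg (hx i).1]
    exact mul_le_of_le_one_left (norm_nonneg _) (hx i).2
  have hround : ∀ (z : ℤ), |(z : ℝ)| ≤ M → z ∈ Set.Icc (-(M : ℤ)) M := by
    intro z hz
    rw [abs_le] at hz
    exact ⟨by exact_mod_cast hz.1, by exact_mod_cast hz.2⟩
  have hfin : ((fun a : (Fin n → ℤ) × ℤ => (intVec a.1, (a.2 : ℝ))) ''
      (Set.Icc (fun _ => -(M : ℤ)) (fun _ => (M : ℤ)) ×ˢ Set.Icc (-(M : ℤ)) M)).Finite :=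
    ((Set.finite_Icc _ _).prod (Set.finite_Icc _ _)).image _
  refine (hfin.preimage (f := (Subtype.val : W → _)) Subtype.val_injective.injOn).subset ?_
  rintro x ⟨⟨⟨m, hm⟩, z, hz⟩, hx⟩
  have hnorm : ‖x.1‖ ≤ M := hbound x hx
  have h1 : ∀ j, |(m j : ℝ)| ≤ M := fun j => by
    have : ‖x.1.1 j‖ ≤ M := (norm_le_pi_norm _ _).trans ((norm_fst_le _).trans hnorm)
    rwa [hm] at this
  have h2 : |(z : ℝ)| ≤ M := by
    have : ‖x.1.2‖ ≤ M := (norm_snd_le _).trans hnorm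
    rwa [hz] at this
  exact ⟨(m, z), ⟨⟨fun j => (hround _ (h1 j)).1, fun j => (hround _ (h1 j)).2⟩, hround _ h2⟩,
    Prod.ext hm.symm hz.symm⟩

/-- Lattice points `m` with `intVec m ∈ A` correspond to lattice points of `W` at height `q`. -/
theorem finsum_eq_finsum_homogenization {n : ℕ} (W : Submodule ℝ ((Fin n → ℝ) × ℝ)) (q : ℕ)
    (A : Set (Fin n → ℝ)) (K : W → Prop) (hAW : ∀ y ∈ A, (y, (q : ℝ)) ∈ W)
    (hK : ∀ x : W, x.1.2 = q → (K x ↔ x.1.1 ∈ A)) (φ : (Fin n → ℝ) → ℂ) :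
    ∑ᶠ m ∈ {m : Fin n → ℤ | intVec m ∈ A}, φ (intVec m) =
      ∑ᶠ x ∈ {x : W | (x ∈ latticeIn W ∧ x.1.2 = q) ∧ K x}, φ x.1.1 := by
  have hfloor : ∀ x : W, x ∈ latticeIn W → intVec (fun j => ⌊x.1.1 j⌋) = x.1.1 := by
    rintro x ⟨⟨m, hm⟩, -⟩
    rw [hm]
    funext j
    simp [intVec]
  symm
  refine finsum_mem_eq_of_bijOn (fun x j => ⌊x.1.1 j⌋) ⟨?_, ?_, ?_⟩ ?_
  · rintro x ⟨⟨hx, hq⟩, hKx⟩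
    change intVec _ ∈ A
    rw [hfloor x hx]
    exact (hK x hq).1 hKx
  · rintro x ⟨⟨hx, hq⟩, -⟩ y ⟨⟨hy, hq'⟩, -⟩ h
    refine Subtype.ext (Prod.ext ?_ (hq.trans hq'.symm))
    rw [← hfloor x hx, ← hfloor y hy]
    exact congrArg intVec h
  · intro m hm
    refine ⟨⟨(intVec m, (q : ℝ)), hAW _ hm⟩, ⟨⟨⟨⟨m, rfl⟩, q, by simp⟩, rfl⟩, ?_⟩, ?_⟩
    · exact (hK _ rfl).2 hm
    · funext j
      simp [intVec]
  · rintro x ⟨⟨hx, -⟩, -⟩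
    rw [hfloor x hx]

/-- Convex combinations of `q • u i` correspond to conical combinations of `(u i, 1)` at height
`q`; the predicate `R` on coefficients is either nonnegativity or positivity. -/
theorem exists_convexComb_iff {ι E : Type*} [Fintype ι] [AddCommGroup E] [Module ℝ E] (u : ι → E)
    (R : ℝ → Prop) (hR : ∀ a : ℝ, 0 < a → ∀ t, R t → R (a * t)) {q : ℝ} (hq : 0 < q) (y : E) :
    (∃ l : ι → ℝ, (∀ i, R (l i)) ∧ ∑ i, l i = 1 ∧ y = ∑ i, l i • (q • u i)) ↔
      ∃ l : ι → ℝ, (∀ i, R (l i)) ∧ (y, q) = ∑ i, l i • (u i, (1 : ℝ)) := by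
  have hpair : ∀ l : ι → ℝ, ∑ i, l i • (u i, (1 : ℝ)) = (∑ i, l i • u i, ∑ i, l i) := by
    intro l
    refine Prod.ext ?_ ?_
    · rw [Prod.fst_sum]; rfl
    · rw [Prod.snd_sum]; simp
  constructor
  · rintro ⟨l, hl, hl1, rfl⟩
    refine ⟨fun i => q * l i, fun i => hR q hq _ (hl i), ?_⟩
    rw [hpair, ← Finset.mul_sum, hl1, mul_one]
    refine Prod.ext (Finset.sum_congr rfl fun i _ => ?_) rfl
    rw [smul_smul, mul_comm]
  · rintro ⟨l, hl, h⟩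
    rw [hpair, Prod.mk.injEq] at h
    refine ⟨fun i => q⁻¹ * l i, fun i => hR _ (inv_pos.2 hq) _ (hl i), ?_, ?_⟩
    · rw [← Finset.mul_sum, ← h.2, inv_mul_cancel₀ hq.ne']
    · rw [h.1]
      refine Finset.sum_congr rfl fun i _ => ?_
      rw [smul_smul, mul_right_comm, inv_mul_cancel₀ hq.ne', one_mul]

end Assembly

/-- (Brion–Vergne reciprocity.)  Let `P ⊂ ℝ^n` be a lattice polytope of
dimension `k` and `φ` a homogeneous polynomial function of degree `d`.  Then there are
polynomials `D`, `D°` of degree at most `d + k` with `D(q) = ∑_{m ∈ ℤ^n ∩ qP} φ(m)` and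
`D°(q) = ∑_{m ∈ ℤ^n ∩ relint(qP)} φ(m)` for all integers `q > 0`, satisfying
`D(-X) = (-1)^{d+k} D°(X)` as polynomials. -/
theorem stmt4 (n k d : ℕ) (P : Set (Fin n → ℝ))
    (S : Finset (Fin n → ℤ)) (hS : S.Nonempty)
    (hP : P = convexHull ℝ (intVec '' (S : Set (Fin n → ℤ))))
    (hdim : faceDim P = k)
    (φ : (Fin n → ℝ) → ℂ) (p : MvPolynomial (Fin n) ℂ) (hp : p.IsHomogeneous d)
    (hφ : ∀ x, φ x = MvPolynomial.eval (fun i => (x i : ℂ)) p) :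
    ∃ D Dint : Polynomial ℂ, D.natDegree ≤ d + k ∧ Dint.natDegree ≤ d + k ∧
      (∀ q : ℕ, 0 < q →
        D.eval (q : ℂ) = ∑ᶠ m ∈ {m : Fin n → ℤ | intVec m ∈ (q : ℝ) • P}, φ (intVec m)) ∧
      (∀ q : ℕ, 0 < q →
        Dint.eval (q : ℂ) =
          ∑ᶠ m ∈ {m : Fin n → ℤ | intVec m ∈ intrinsicInterior ℝ ((q : ℝ) • P)},
            φ (intVec m)) ∧
      D.comp (-Polynomial.X) = Polynomial.C ((-1 : ℂ) ^ (d + k)) * Dint := by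
  have : Nonempty S := hS.to_subtype
  let u : S → (Fin n → ℝ) := fun s => intVec s.1
  have hPu : P = convexHull ℝ (Set.range u) := by
    rw [hP]
    congr 1
    ext x
    simp [u]
  let W := Submodule.span ℝ (Set.range fun s : S => (u s, (1 : ℝ)))
  have hvW : ∀ s : S, (u s, (1 : ℝ)) ∈ W := fun s => Submodule.subset_span ⟨s, rfl⟩
  let v : S → W := fun s => ⟨(u s, 1), hvW s⟩
  have hspan : Submodule.span ℝ (Set.range v) = ⊤ := by
    apply Submodule.map_injective_of_injective W.injective_subtype
    rw [Submodule.map_span, Submodule.map_top, Submodule.range_subtype, ← Set.range_comp]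
    rfl
  have hk : Module.finrank ℝ W = k + 1 := by
    rw [finrank_span_homogenization u, ← hdim, faceDim, hPu, affineSpan_convexHull,
      direction_affineSpan]
  let ht : W →ₗ[ℝ] ℝ := (LinearMap.snd ℝ (Fin n → ℝ) ℝ).comp W.subtype
  have hφneg : ∀ x : Fin n → ℝ, φ (-x) = (-1) ^ d * φ x := by
    intro x
    rw [hφ, hφ, ← eval_neg_of_isHomogeneous hp]
    congr 2
    funext i
    simp
  obtain ⟨D, hDdeg, hD⟩ := exists_cone_poly k d hk v hspan ht (fun _ => rfl) (latticeIn W)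
    (fun s => ⟨⟨s.1, rfl⟩, 1, by simp [v]⟩) (fun x hx => hx.2)
    (fun B b => finite_box_inter_latticeIn W b) (fun x => φ x.1.1) (fun x => hφneg x.1.1)
    (fun B a y => by
      obtain ⟨p', hp', h⟩ := exists_affine_subst p y.1.1 (fun i => (a i).1.1)
      refine ⟨p', hp'.trans hp.totalDegree_le, fun c => ?_⟩
      rw [← h, hφ]
      congr 2
      funext j
      simp [Prod.fst_sum])
  have hqP : ∀ q : ℝ, q • P = convexHull ℝ (Set.range fun s => q • u s) := by
    intro q
    rw [hPu, ← convexHull_smul, Set.smul_set_range]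
  -- coefficients of a conical combination may be compared in `W` or in `ℝⁿ × ℝ`
  have hval : ∀ (x : W) (l : S → ℝ),
      x = ∑ s, l s • v s ↔ x.1 = ∑ s, l s • (u s, (1 : ℝ)) := by
    intro x l
    rw [Subtype.ext_iff]
    simp [v]
  have hmemW : ∀ l : S → ℝ, ∑ s, l s • (u s, (1 : ℝ)) ∈ W :=
    fun l => W.sum_mem fun s _ => W.smul_mem _ (hvW s)
  have hclosed : ∀ q : ℕ, 0 < q → ∀ y, y ∈ (q : ℝ) • P ↔
      ∃ l : S → ℝ, (∀ s, 0 ≤ l s) ∧ (y, (q : ℝ)) = ∑ s, l s • (u s, (1 : ℝ)) := by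
    intro q hq y
    rw [hqP, mem_convexHull_range_iff]
    exact exists_convexComb_iff u (fun t => 0 ≤ t) (fun a ha t h => mul_nonneg ha.le h)
      (Nat.cast_pos.2 hq) y
  have hopen : ∀ q : ℕ, 0 < q → ∀ y, y ∈ intrinsicInterior ℝ ((q : ℝ) • P) ↔
      ∃ l : S → ℝ, (∀ s, 0 < l s) ∧ (y, (q : ℝ)) = ∑ s, l s • (u s, (1 : ℝ)) := by
    intro q hq y
    rw [hqP, mem_intrinsicInterior_convexHull_iff]
    exact exists_convexComb_iff u (fun t => 0 < t) (fun a ha t h => mul_pos ha h)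
      (Nat.cast_pos.2 hq) y
  have hsq : ((-1 : ℂ) ^ (d + k)) * (-1) ^ (d + k) = 1 := by
    rw [← mul_pow, neg_one_mul, neg_neg, one_pow]
  refine ⟨D, C ((-1 : ℂ) ^ (d + k)) * D.comp (-X), hDdeg, ?_, ?_, ?_, ?_⟩
  · refine (Polynomial.natDegree_C_mul_le _ _).trans ?_
    rw [Polynomial.natDegree_comp, Polynomial.natDegree_neg, Polynomial.natDegree_X, mul_one]
    exact hDdeg
  · intro q hq
    rw [finsum_eq_finsum_homogenization W q ((q : ℝ) • P) (InCone v) ?_ ?_ φ]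
    · exact (hD q hq).1.symm
    · intro y hy
      obtain ⟨l, -, hl⟩ := (hclosed q hq y).1 hy
      rw [hl]
      exact hmemW l
    · intro x hx
      rw [hclosed q hq, ← hx]
      simp only [InCone, hval]
  · intro q hq
    rw [finsum_eq_finsum_homogenization W q (intrinsicInterior ℝ ((q : ℝ) • P))
      (fun x => ∃ l : S → ℝ, (∀ s, 0 < l s) ∧ x = ∑ s, l s • v s) ?_ ?_ φ]
    · rw [Polynomial.eval_mul, Polynomial.eval_C, Polynomial.eval_comp, Polynomial.eval_neg,
        Polynomial.eval_X, ← (hD q hq).2, ← mul_assoc, hsq, one_mul]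
      rfl
    · intro y hy
      obtain ⟨l, -, hl⟩ := (hopen q hq y).1 hy
      rw [hl]
      exact hmemW l
    · intro x hx
      rw [hopen q hq, ← hx]
      simp only [hval]
  · rw [← mul_assoc, ← Polynomial.C_mul, hsq, Polynomial.C_1, one_mul]
end
end

section
/- Let F ⊂ ℝ^n be a lattice polytope of dimension k and let φ : ℝ^n → ℂ be a homogeneous polynomial function of degree d. Then there is a unique polynomial D_{φ,F} of degree at most k + d such that D_{φ,F}(q) = Σ_{m ∈ ℤ^n ∩ qF} φ(m) for every integer q > 0, and its constant term is D_{φ,F}(0) = φ(0). -/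
/-!
The weighted Ehrhart theorem with its constant term, proved through a lexicographic triangulation.

Let `w 0, …, w N` be the given lattice points. Every point `m` of `q F` is `∑ l i w i` with `l ≥ 0`
and `∑ l i = q`; the lexicographically largest such `l` is a canonical choice. Whether `l` is
canonical depends only on its support `s` (the predicate `Good`). The good sets are the faces of a
triangulation: they are affinely independent (`Good.eq_zero`, `Good.card_le`), closed under subsets,
and closed under insertion of `0` (`Good.insert_zero`). Canonical coefficients exist by compactness
(`exists_good`) and are unique (`Good.unique`).

Writing `l i = n i - f i` with `n i = ⌈l i⌉` and `0 ≤ f i < 1` gives a bijection between the lattice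
points of `q F` and triples `(s, f, n)`, where `s` is a good set, `f` one of finitely many box points
of `s`, and `n` a vector with support exactly `s` and total `q + ∑ f` (`bijOn_triples`). For fixed
`(s, f)` the sum of the weight over all `n` is a polynomial in `q ≥ 1` of degree at most
`d + |s| - 1 ≤ d + k` (`exists_sum_posComp`, by iterated convolution of polynomials).

At `q = 0`, the box point `f = 0` contributes `(-1) ^ (|s| - 1) φ(0)`. A box point `f ≠ 0` contributes
`0`, because `0 < ∑ f < |s|` leaves no positive vector with total `∑ f`. The alternating sum over the
nonempty good sets is `1`, since toggling the element `0` is a sign-reversing involution on all good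
sets (`euler_good`). Hence the constant term is `φ(0)`. Uniqueness holds because two polynomials
agreeing at all positive integers are equal.
-/

open scoped Pointwise Classical
open MeasureTheory Polynomial

noncomputable section

/-! ### Sums of polynomial values over positive compositions -/

lemma exists_sum_range_pow (e : ℕ) : ∃ B : ℂ[X], B.natDegree ≤ e + 1 ∧
    ∀ u : ℕ, B.eval (u : ℂ) = ∑ v ∈ Finset.range u, (v : ℂ) ^ e := by
  refine ⟨∑ i ∈ Finset.range (e + 1),
    C (((_root_.bernoulli i * ((e + 1).choose i) / (e + 1) : ℚ) : ℂ)) * X ^ (e + 1 - i), ?_, ?_⟩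
  · refine Polynomial.natDegree_sum_le_of_forall_le _ _ fun i _ => ?_
    exact (natDegree_C_mul_X_pow_le _ _).trans (by omega)
  · intro u
    have h := congrArg (fun x : ℚ => (x : ℂ)) (sum_range_pow u e)
    push_cast at h
    rw [h, eval_finsetSum]
    refine Finset.sum_congr rfl fun i _ => ?_
    simp only [eval_mul, eval_C, eval_pow, eval_X]
    push_cast
    ring

/-- Indefinite summation of a polynomial raises its degree by at most one. -/
lemma exists_sum_range (f : ℂ[X]) (a : ℕ) (hf : f.natDegree ≤ a) :
    ∃ B : ℂ[X], B.natDegree ≤ a + 1 ∧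
      ∀ u : ℕ, B.eval (u : ℂ) = ∑ v ∈ Finset.range u, f.eval (v : ℂ) := by
  choose B hB hB' using exists_sum_range_pow
  refine ⟨∑ i ∈ Finset.range (a + 1), C (f.coeff i) * B i, ?_, ?_⟩
  · refine Polynomial.natDegree_sum_le_of_forall_le _ _ fun i hi => ?_
    have := Finset.mem_range.1 hi
    exact (natDegree_C_mul_le _ _).trans ((hB i).trans (by omega))
  · intro u
    simp only [eval_finsetSum, eval_mul, eval_C, hB', Finset.mul_sum]
    rw [Finset.sum_comm]
    refine Finset.sum_congr rfl fun v _ => ?_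
    rw [eval_eq_sum_range' (Nat.lt_succ_of_le hf)]

/-- The function `g : ℕ → ℂ` vanishes at `0` and agrees at every positive integer with the
polynomial `G`, whose value at `0` is unconstrained. -/
def PosPoly (g : ℕ → ℂ) (G : ℂ[X]) : Prop :=
  g 0 = 0 ∧ ∀ u : ℕ, 0 < u → g u = G.eval (u : ℂ)

lemma exists_conv_pow (f : ℂ[X]) (a m : ℕ) (hf : f.natDegree ≤ a) :
    ∃ K : ℂ[X], K.natDegree ≤ a + m + 1 ∧ K.eval 0 = 0 ∧
      ∀ u : ℕ, K.eval (u : ℂ) = ∑ v ∈ Finset.range u, f.eval (v : ℂ) * ((u : ℂ) - v) ^ m := by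
  have hdeg : ∀ j, (f * (-X) ^ j).natDegree ≤ a + j := fun j => by
    refine natDegree_mul_le.trans (add_le_add hf ?_)
    refine natDegree_pow_le.trans ?_
    simp
  choose B hB hB' using fun j => exists_sum_range (f * (-X) ^ j) (a + j) (hdeg j)
  have key : ∀ u : ℕ, (∑ k ∈ Finset.range (m + 1), C ((m.choose k : ℂ)) * X ^ k * B (m - k)).eval
      (u : ℂ) = ∑ v ∈ Finset.range u, f.eval (v : ℂ) * ((u : ℂ) - v) ^ m := by
    intro u
    simp only [eval_finsetSum, eval_mul, eval_C, eval_pow, eval_X, hB', Finset.mul_sum, eval_neg]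
    rw [Finset.sum_comm]
    refine Finset.sum_congr rfl fun v _ => ?_
    rw [sub_eq_add_neg, add_pow, Finset.mul_sum]
    refine Finset.sum_congr rfl fun k _ => ?_
    ring
  refine ⟨_, ?_, ?_, key⟩
  · refine Polynomial.natDegree_sum_le_of_forall_le _ _ fun k hk => ?_
    have := Finset.mem_range.1 hk
    refine natDegree_mul_le.trans ((add_le_add (natDegree_C_mul_X_pow_le _ _) (hB _)).trans ?_)
    omega
  · simpa using key 0

/-- Convolution of two functions given by polynomials at positive integers. The value at `0` of the
resulting polynomial is the reason for the sign `(-1) ^ dim` in the constant term of an open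
simplex: extending the sum over `0 < v < u` to `0 ≤ v < u` gives a polynomial without constant
term, and the extra term `v = 0` contributes `-G(0) H(0)`. -/
lemma PosPoly.conv {g h : ℕ → ℂ} {G H : ℂ[X]} (hg : PosPoly g G) (hh : PosPoly h H) {a b : ℕ}
    (hG : G.natDegree ≤ a) (hH : H.natDegree ≤ b) :
    ∃ K : ℂ[X], K.natDegree ≤ a + b + 1 ∧ K.eval 0 = -(G.eval 0 * H.eval 0) ∧
      PosPoly (fun u => ∑ p ∈ Finset.HasAntidiagonal.antidiagonal u, g p.1 * h p.2) K := by
  choose L hL hL0 hL' using fun m => exists_conv_pow G a m hG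
  refine ⟨(∑ m ∈ Finset.range (b + 1), C (H.coeff m) * L m) - C (G.eval 0) * H, ?_, ?_, ?_, ?_⟩
  · refine (natDegree_sub_le _ _).trans (max_le ?_ ?_)
    · refine Polynomial.natDegree_sum_le_of_forall_le _ _ fun m hm => ?_
      have := Finset.mem_range.1 hm
      exact (natDegree_C_mul_le _ _).trans ((hL m).trans (by omega))
    · exact (natDegree_C_mul_le _ _).trans (by omega)
  · simp [eval_finsetSum, hL0]
  · simp [hg.1]
  · intro u hu
    have h1 : ∑ v ∈ Finset.range u, G.eval (v : ℂ) * H.eval ((u : ℂ) - v)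
        = (∑ m ∈ Finset.range (b + 1), C (H.coeff m) * L m).eval (u : ℂ) := by
      simp only [eval_finsetSum, eval_mul, eval_C, hL', Finset.mul_sum]
      rw [Finset.sum_comm]
      refine Finset.sum_congr rfl fun v _ => ?_
      rw [eval_eq_sum_range' (Nat.lt_succ_of_le hH), Finset.mul_sum]
      refine Finset.sum_congr rfl fun m _ => ?_
      ring
    obtain ⟨u, rfl⟩ : ∃ u', u = u' + 1 := ⟨u - 1, by omega⟩
    beta_reduce
    rw [eval_sub, ← h1, Finset.Nat.sum_antidiagonal_eq_sum_range_succ (fun i j => g i * h j),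
      Finset.sum_range_succ, Finset.sum_range_succ', Finset.sum_range_succ']
    simp only [hg.1, Nat.sub_self, hh.1, zero_mul, mul_zero, add_zero, Nat.cast_zero, sub_zero,
      eval_mul, eval_C, add_sub_cancel_right]
    refine Finset.sum_congr rfl fun v hv => ?_
    have hv' := Finset.mem_range.1 hv
    rw [hg.2 _ (Nat.succ_pos v), hh.2 _ (by omega), Nat.cast_sub (by omega)]

lemma exists_prod_piAntidiag {ι : Type*} (g : ι → ℕ → ℂ) (G : ι → ℂ[X]) (e : ι → ℕ)
    (hg : ∀ i, PosPoly (g i) (G i)) (hG : ∀ i, (G i).natDegree ≤ e i)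
    (s : Finset ι) (hs : s.Nonempty) :
    ∃ K : ℂ[X], K.natDegree + 1 ≤ (∑ i ∈ s, e i) + s.card ∧
      K.eval 0 = (-1) ^ (s.card + 1) * ∏ i ∈ s, (G i).eval 0 ∧
      PosPoly (fun u => ∑ n ∈ s.piAntidiag u, ∏ i ∈ s, g i (n i)) K := by
  induction hs using Finset.Nonempty.cons_induction with
  | singleton i =>
    refine ⟨G i, by simpa using hG i, by simp, ?_⟩
    have : (fun u => ∑ n ∈ Finset.piAntidiag {i} u, ∏ j ∈ {i}, g j (n j)) = g i := by
      funext u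
      have h1 : Finset.piAntidiag {i} u = {Pi.single i u} := by
        ext n
        simp only [Finset.mem_piAntidiag, Finset.sum_singleton, Finset.mem_singleton]
        constructor
        · rintro ⟨rfl, h⟩
          funext j
          by_cases hj : j = i
          · subst hj; simp
          · simp only [Pi.single_eq_of_ne hj]
            by_contra hne
            exact hj (h j hne)
        · rintro rfl
          refine ⟨by simp, fun j hj => ?_⟩
          by_contra hne
          exact hj (by simp [hne])
      rw [h1]; simp
    rw [this]; exact hg i
  | cons i s hi hs ih =>
    obtain ⟨K, hK, hK0, hK'⟩ := ih
    obtain ⟨M, hM, hM0, hM'⟩ := (hg i).conv hK' (hG i) le_rfl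
    refine ⟨M, ?_, ?_, ?_⟩
    · rw [Finset.sum_cons, Finset.card_cons]; omega
    · rw [hM0, hK0, Finset.prod_cons, Finset.card_cons]; ring
    · convert hM' using 2 with u
      rw [Finset.piAntidiag_cons, Finset.sum_disjiUnion]
      refine Finset.sum_congr rfl fun p _ => ?_
      rw [Finset.sum_map, Finset.mul_sum]
      refine Finset.sum_congr rfl fun n hn => ?_
      have hni : n i = 0 := by
        by_contra h
        exact hi ((Finset.mem_piAntidiag.1 hn).2 i h)
      rw [Finset.prod_cons]
      congr 1
      · simp [hni]
      · refine Finset.prod_congr rfl fun j hj => ?_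
        have : j ≠ i := fun h => hi (h ▸ hj)
        simp [this]

/-- The functions `n : ι → ℕ` with support exactly `s` and total `u`. -/
def posComp {ι : Type*} (s : Finset ι) (u : ℕ) : Finset (ι → ℕ) :=
  (s.piAntidiag u).filter fun n => ∀ i ∈ s, n i ≠ 0

lemma mem_posComp {ι : Type*} {s : Finset ι} {u : ℕ} {n : ι → ℕ} :
    n ∈ posComp s u ↔ ∑ i ∈ s, n i = u ∧ ∀ i, n i ≠ 0 ↔ i ∈ s := by
  simp only [posComp, Finset.mem_filter, Finset.mem_piAntidiag]
  grind

/-- The sum of a polynomial of degree `≤ d` over the lattice points of the `u`-th dilate of an open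
unimodular simplex of dimension `|s| - 1` is a polynomial in `u ≥ 1`, of degree at most
`d + |s| - 1`, with constant term `(-1) ^ (|s| - 1) P(0)`. -/
lemma exists_sum_posComp {ι : Type*} [Fintype ι] (P : MvPolynomial ι ℂ) (d : ℕ)
    (hP : P.totalDegree ≤ d) (s : Finset ι) (hs : s.Nonempty) :
    ∃ K : ℂ[X], K.natDegree + 1 ≤ d + s.card ∧
      K.eval 0 = (-1) ^ (s.card + 1) * MvPolynomial.eval 0 P ∧
      ∀ u : ℕ, 0 < u → K.eval (u : ℂ) =
        ∑ n ∈ posComp s u, MvPolynomial.eval (fun i => (n i : ℂ)) P := by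
  have base : ∀ e : ι →₀ ℕ, ∃ K : ℂ[X], K.natDegree + 1 ≤ (∑ i ∈ s, e i) + s.card ∧
      K.eval 0 = (-1) ^ (s.card + 1) * ∏ i ∈ s, (0 : ℂ) ^ e i ∧
      ∀ u : ℕ, 0 < u → K.eval (u : ℂ) = ∑ n ∈ posComp s u, ∏ i ∈ s, (n i : ℂ) ^ e i := by
    intro e
    obtain ⟨K, h1, h2, h3⟩ := exists_prod_piAntidiag
      (fun i v => if v = 0 then 0 else (v : ℂ) ^ e i) (fun i => X ^ e i) e
      (fun i => ⟨by simp, fun u hu => by simp [hu.ne']⟩) (fun i => by simp) s hs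
    refine ⟨K, h1, by simpa using h2, fun u hu => ?_⟩
    rw [← h3.2 u hu, posComp, Finset.sum_filter]
    refine Finset.sum_congr rfl fun n _ => ?_
    split_ifs with h
    · exact Finset.prod_congr rfl fun i hi => by simp [h i hi]
    · push Not at h
      obtain ⟨i, hi, hi'⟩ := h
      exact Finset.prod_eq_zero hi (by simp [hi'])
  choose K h1 h2 h3 using base
  have hev : ∀ x : ι → ℂ, (∀ i, i ∉ s → x i = 0) → MvPolynomial.eval x P =
      ∑ e ∈ P.support, P.coeff e * (∏ i ∈ sᶜ, (0 : ℂ) ^ e i) * ∏ i ∈ s, x i ^ e i := by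
    intro x hx
    rw [MvPolynomial.eval_eq']
    refine Finset.sum_congr rfl fun e _ => ?_
    rw [← Finset.prod_compl_mul_prod s, mul_assoc]
    congr 2
    exact Finset.prod_congr rfl fun i hi => by rw [hx i (Finset.mem_compl.1 hi)]
  refine ⟨∑ e ∈ P.support, C (P.coeff e * ∏ i ∈ sᶜ, (0 : ℂ) ^ e i) * K e, ?_, ?_, ?_⟩
  · have hc := hs.card_pos
    suffices h : (∑ e ∈ P.support, C (P.coeff e * ∏ i ∈ sᶜ, (0 : ℂ) ^ e i) * K e).natDegree
        ≤ d + s.card - 1 by omega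
    refine Polynomial.natDegree_sum_le_of_forall_le _ _ fun e he => ?_
    refine (natDegree_C_mul_le _ _).trans ?_
    have h4 := MvPolynomial.le_totalDegree he
    rw [Finsupp.sum_fintype _ _ (fun _ => rfl)] at h4
    have h5 : ∑ i ∈ s, e i ≤ ∑ i, e i :=
      Finset.sum_le_sum_of_subset (Finset.subset_univ s)
    have := h1 e
    omega
  · rw [hev 0 (fun _ _ => rfl), eval_finsetSum, Finset.mul_sum]
    refine Finset.sum_congr rfl fun e _ => ?_
    simp only [eval_mul, eval_C, h2, Pi.zero_apply]
    ring
  · intro u hu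
    have h6 : ∀ n ∈ posComp s u, MvPolynomial.eval (fun i => (n i : ℂ)) P =
        ∑ e ∈ P.support, P.coeff e * (∏ i ∈ sᶜ, (0 : ℂ) ^ e i) * ∏ i ∈ s, (n i : ℂ) ^ e i := by
      intro n hn
      refine hev _ fun i hi => ?_
      have := (mem_posComp.1 hn).2 i
      have : n i = 0 := by tauto
      simp [this]
    rw [Finset.sum_congr rfl h6, Finset.sum_comm, eval_finsetSum]
    refine Finset.sum_congr rfl fun e _ => ?_
    rw [eval_mul, eval_C, h3 e u hu, Finset.mul_sum]

/-- Substituting polynomials of degree at most one does not raise the degree. -/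
lemma totalDegree_bind₁_le {σ τ : Type*} (f : σ → MvPolynomial τ ℂ)
    (hf : ∀ i, (f i).totalDegree ≤ 1) (p : MvPolynomial σ ℂ) :
    (MvPolynomial.bind₁ f p).totalDegree ≤ p.totalDegree := by
  conv_lhs => rw [p.as_sum, map_sum]
  refine (MvPolynomial.totalDegree_finsetSum _ _).trans (Finset.sup_le fun e he => ?_)
  refine le_trans ?_ (MvPolynomial.le_totalDegree he)
  rw [MvPolynomial.bind₁_monomial]
  refine (MvPolynomial.totalDegree_mul _ _).trans ?_
  rw [MvPolynomial.totalDegree_C, zero_add]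
  refine (MvPolynomial.totalDegree_finsetProd _ _).trans ?_
  refine Finset.sum_le_sum fun i _ => ?_
  refine (MvPolynomial.totalDegree_pow _ _).trans ?_
  exact (Nat.mul_le_mul_left _ (hf i)).trans (by simp)

/-! ### The lexicographic triangulation -/

/-- The first nonzero entry of `r` exists and is positive. -/
def LexPos {M : ℕ} (r : Fin M → ℝ) : Prop := ∃ i, 0 < r i ∧ ∀ j < i, r j = 0

lemma lexPos_trichotomy {M : ℕ} (r : Fin M → ℝ) (hr : r ≠ 0) : LexPos r ∨ LexPos (-r) := by
  have hne : (Finset.univ.filter fun i => r i ≠ 0).Nonempty := by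
    obtain ⟨i, hi⟩ := Function.ne_iff.1 hr
    exact ⟨i, by simpa using hi⟩
  obtain ⟨i, hi, hmin⟩ := (Finset.univ.filter fun i => r i ≠ 0).exists_minimal hne
  have hz : ∀ j < i, r j = 0 := by
    intro j hj
    by_contra h
    exact absurd (hmin (by simpa using h) hj.le) (not_le.2 hj)
  rcases lt_or_gt_of_ne (Finset.mem_filter.1 hi).2 with h | h
  · exact Or.inr ⟨i, by simpa using h, fun j hj => by simp [hz j hj]⟩
  · exact Or.inl ⟨i, h, hz⟩

/-- A nonempty compact set has a lexicographically largest element. -/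
lemma exists_lexMax {M : ℕ} (K : Set (Fin M → ℝ)) (hK : IsCompact K) (hne : K.Nonempty) :
    ∃ x ∈ K, ∀ y ∈ K, ¬ LexPos (y - x) := by
  have step : ∀ c : ℕ, c ≤ M → ∃ L ⊆ K, IsCompact L ∧ L.Nonempty ∧
      (∀ x ∈ L, ∀ y ∈ K, (∀ j : Fin M, (j : ℕ) < c → y j = x j) → y ∈ L) ∧
      (∀ x ∈ L, ∀ y ∈ K, ∀ i : Fin M, (i : ℕ) < c → (∀ j < i, y j = x j) → y i ≤ x i) := by
    intro c
    induction c with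
    | zero =>
      intro _
      exact ⟨K, subset_rfl, hK, hne, fun _ _ y hy _ => hy, fun _ _ _ _ i hi => absurd hi (by omega)⟩
    | succ c ih =>
      intro hc
      obtain ⟨L, hLK, hL, hLne, hcl, hmax⟩ := ih (by omega)
      let a : Fin M := ⟨c, by omega⟩
      have hcont : Continuous fun x : Fin M → ℝ => x a := continuous_apply a
      obtain ⟨z, hz, hzmax⟩ := hL.exists_isMaxOn hLne hcont.continuousOn
      have hzmax' : ∀ y ∈ L, y a ≤ z a := fun y hy => hzmax hy
      refine ⟨L ∩ {x | x a = z a}, fun x hx => hLK hx.1,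
        hL.inter_right (isClosed_eq hcont continuous_const), ⟨z, hz, rfl⟩, ?_, ?_⟩
      · rintro x ⟨hx, hxa⟩ y hy hyx
        refine ⟨hcl x hx y hy fun j hj => hyx j (by omega), ?_⟩
        have : y a = x a := hyx a (Nat.lt_succ_self c)
        exact this.trans hxa
      · rintro x ⟨hx, hxa⟩ y hy i hi hyx
        rcases Nat.lt_succ_iff_lt_or_eq.1 hi with h | h
        · exact hmax x hx y hy i h hyx
        · have hia : i = a := Fin.ext h
          subst hia
          have hyL : y ∈ L := hcl x hx y hy fun j hj => hyx j hj
          have hxa' : x a = z a := hxa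
          exact (hzmax' y hyL).trans hxa'.ge
  obtain ⟨L, hLK, -, ⟨x, hx⟩, -, hmax⟩ := step M le_rfl
  refine ⟨x, hLK hx, fun y hy ⟨i, hi, hj⟩ => ?_⟩
  have := hmax x hx y hy i i.2 fun j hji => by
    have := hj j hji
    simp only [Pi.sub_apply] at this
    linarith
  simp only [Pi.sub_apply] at hi
  linarith

/-- The linear combination `∑ i, l i • w i` of the integer vectors `w i`. -/
def lin {M n : ℕ} (w : Fin M → Fin n → ℤ) (l : Fin M → ℝ) : Fin n → ℝ :=
  fun j => ∑ i, l i * (w i j : ℝ)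

lemma lin_sub {M n : ℕ} (w : Fin M → Fin n → ℤ) (l l' : Fin M → ℝ) :
    lin w (l - l') = lin w l - lin w l' := by
  funext j; simp [lin, sub_mul]

lemma lin_add_smul {M n : ℕ} (w : Fin M → Fin n → ℤ) (l l' : Fin M → ℝ) (c : ℝ) :
    lin w (l + c • l') = lin w l + c • lin w l' := by
  funext j; simp [lin, add_mul, Finset.sum_add_distrib, Finset.mul_sum, mul_assoc]

/-- The set of indices at which `l` does not vanish. -/
def suppF {M : ℕ} (l : Fin M → ℝ) : Finset (Fin M) := Finset.univ.filter fun i => l i ≠ 0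

lemma mem_suppF {M : ℕ} {l : Fin M → ℝ} {i : Fin M} : i ∈ suppF l ↔ l i ≠ 0 := by
  simp [suppF]

/-- `s` is a face of the lexicographic (pulling) triangulation of the point configuration `w`:
no affine relation with positive leading entry is nonnegative off `s`. Equivalently, any nonnegative
`l` with support `s` is lexicographically largest among the nonnegative `l'` with
`lin w l' = lin w l` and the same total. -/
def Good {M n : ℕ} (w : Fin M → Fin n → ℤ) (s : Finset (Fin M)) : Prop :=
  ∀ r : Fin M → ℝ, lin w r = 0 → ∑ i, r i = 0 → LexPos r → ∃ i ∉ s, r i < 0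

lemma Good.mono {M n : ℕ} {w : Fin M → Fin n → ℤ} {s t : Finset (Fin M)} (h : Good w s)
    (hts : t ⊆ s) : Good w t := fun r h1 h2 h3 => by
  obtain ⟨i, hi, hr⟩ := h r h1 h2 h3
  exact ⟨i, fun h => hi (hts h), hr⟩

lemma good_empty {M n : ℕ} (w : Fin M → Fin n → ℤ) : Good w ∅ := by
  intro r _ h2 ⟨i, hi, _⟩
  by_contra! h
  have := (Finset.sum_eq_zero_iff_of_nonneg fun i _ => h i (Finset.notMem_empty i)).1 h2 i
    (Finset.mem_univ i)
  linarith

/-- The triangulation is a cone with apex the first point. -/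
lemma Good.insert_zero {N n : ℕ} {w : Fin (N + 1) → Fin n → ℤ} {s : Finset (Fin (N + 1))}
    (h : Good w s) : Good w (insert 0 s) := fun r h1 h2 h3 => by
  obtain ⟨i, hi, hr⟩ := h r h1 h2 h3
  refine ⟨i, ?_, hr⟩
  rw [Finset.mem_insert, not_or]
  refine ⟨?_, hi⟩
  rintro rfl
  obtain ⟨j, hj, hj'⟩ := h3
  rcases (Fin.zero_le j).eq_or_lt with h | h
  · subst h; linarith
  · linarith [hj' 0 h]

lemma Good.eq_zero {M n : ℕ} {w : Fin M → Fin n → ℤ} {s : Finset (Fin M)} (h : Good w s)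
    (r : Fin M → ℝ) (h1 : lin w r = 0) (h2 : ∑ i, r i = 0) (h3 : ∀ i ∉ s, r i = 0) : r = 0 := by
  by_contra hr
  rcases lexPos_trichotomy r hr with hp | hp
  · obtain ⟨i, hi, hlt⟩ := h r h1 h2 hp
    linarith [h3 i hi]
  · obtain ⟨i, hi, hlt⟩ := h (-r) (by
        funext j
        simpa [lin] using congrFun h1 j)
      (by simp [h2]) hp
    simp only [Pi.neg_apply] at hlt
    linarith [h3 i hi]

lemma Good.unique {M n : ℕ} {w : Fin M → Fin n → ℤ} {l l' : Fin M → ℝ}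
    (hl : ∀ i, 0 ≤ l i) (hl' : ∀ i, 0 ≤ l' i) (hg : Good w (suppF l)) (hg' : Good w (suppF l'))
    (h1 : lin w l = lin w l') (h2 : ∑ i, l i = ∑ i, l' i) : l = l' := by
  have aux : ∀ a b : Fin M → ℝ, (∀ i, 0 ≤ a i) → Good w (suppF b) → lin w a = lin w b →
      ∑ i, a i = ∑ i, b i → ¬ LexPos (a - b) := by
    intro a b ha hb h1 h2 hp
    obtain ⟨i, hi, hlt⟩ := hb (a - b) (by rw [lin_sub, h1, sub_self])
      (by simp [h2]) hp
    rw [mem_suppF, not_not] at hi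
    simp only [Pi.sub_apply, hi] at hlt
    linarith [ha i]
  by_contra hne
  rcases lexPos_trichotomy (l - l') (sub_ne_zero.2 hne) with hp | hp
  · exact aux l l' hl hg' h1 h2 hp
  · rw [neg_sub] at hp
    exact aux l' l hl' hg h1.symm h2.symm hp

lemma exists_pos_add_smul_nonneg {M : ℕ} (l r : Fin M → ℝ) (hl : ∀ i, 0 ≤ l i)
    (hr : ∀ i, l i = 0 → 0 ≤ r i) : ∃ ε > (0 : ℝ), ∀ i, 0 ≤ l i + ε * r i := by
  have h : ∀ i, ∀ᶠ ε in nhdsWithin (0 : ℝ) (Set.Ioi 0), 0 ≤ l i + ε * r i := by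
    intro i
    rcases (hl i).eq_or_lt with h0 | h0
    · filter_upwards [self_mem_nhdsWithin] with ε hε
      rw [← h0, zero_add]
      exact mul_nonneg (le_of_lt hε) (hr i h0.symm)
    · have hc : Continuous fun ε : ℝ => l i + ε * r i := by fun_prop
      have ht := (hc.tendsto 0).mono_left (nhdsWithin_le_nhds (s := Set.Ioi 0))
      refine (ht.eventually (lt_mem_nhds (a := 0) (by simpa using h0))).mono fun _ h => le_of_lt h
  obtain ⟨ε, h1, h2⟩ := ((Filter.eventually_all.2 h).and self_mem_nhdsWithin).exists
  exact ⟨ε, h2, h1⟩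

/-- The cones over the faces of the lexicographic triangulation cover the cone over the
configuration. -/
lemma exists_good {M n : ℕ} (w : Fin M → Fin n → ℤ) (l : Fin M → ℝ) (hl : ∀ i, 0 ≤ l i) :
    ∃ l' : Fin M → ℝ, (∀ i, 0 ≤ l' i) ∧ lin w l' = lin w l ∧ ∑ i, l' i = ∑ i, l i ∧
      Good w (suppF l') := by
  let K : Set (Fin M → ℝ) := {x | (∀ i, 0 ≤ x i) ∧ lin w x = lin w l ∧ ∑ i, x i = ∑ i, l i}
  have hclosed : IsClosed K := by
    have h1 : IsClosed {x : Fin M → ℝ | ∀ i, 0 ≤ x i} := by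
      simp only [Set.ofPred_forall]
      exact isClosed_iInter fun i => isClosed_le continuous_const (continuous_apply i)
    have h2 : IsClosed {x : Fin M → ℝ | lin w x = lin w l} :=
      isClosed_eq (by unfold lin; fun_prop) continuous_const
    have h3 : IsClosed {x : Fin M → ℝ | ∑ i, x i = ∑ i, l i} :=
      isClosed_eq (by fun_prop) continuous_const
    exact h1.inter (h2.inter h3)
  have hcomp : IsCompact K := by
    refine (isCompact_Icc (a := (0 : Fin M → ℝ)) (b := fun _ => ∑ i, l i)).of_isClosed_subset
      hclosed ?_
    rintro x ⟨h1, -, h3⟩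
    refine ⟨h1, fun i => ?_⟩
    rw [← h3]
    exact Finset.single_le_sum (fun j _ => h1 j) (Finset.mem_univ i)
  obtain ⟨x, ⟨hx0, hx1, hx2⟩, hmax⟩ := exists_lexMax K hcomp ⟨l, hl, rfl, rfl⟩
  refine ⟨x, hx0, hx1, hx2, fun r hr1 hr2 hp => ?_⟩
  by_contra! hcon
  obtain ⟨ε, hε, hpos⟩ := exists_pos_add_smul_nonneg x r hx0 fun i hi =>
    hcon i (by rw [mem_suppF]; simpa using hi)
  refine hmax (x + ε • r) ⟨fun i => by simpa using hpos i, ?_, ?_⟩ ?_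
  · rw [lin_add_smul, hr1, hx1]; simp
  · simp [Finset.sum_add_distrib, ← Finset.mul_sum, hr2, hx2]
  · obtain ⟨i, hi, hj⟩ := hp
    refine ⟨i, by simpa using mul_pos hε hi, fun j hji => by simp [hj j hji]⟩

/-- Vertices of a face of the triangulation are affinely independent. -/
lemma Good.card_le {M n : ℕ} {w : Fin M → Fin n → ℤ} {s : Finset (Fin M)} (h : Good w s) :
    s.card ≤ faceDim (convexHull ℝ (Set.range fun i => intVec (w i))) + 1 := by
  have hind : AffineIndependent ℝ (fun i : s => intVec (w i)) := by
    rw [affineIndependent_iff]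
    intro t r hr0 hr1 i hi
    let r' : Fin M → ℝ := fun i => if hi : i ∈ s then if (⟨i, hi⟩ : s) ∈ t then r ⟨i, hi⟩ else 0
      else 0
    have hsum : ∀ g : Fin M → ℝ, ∑ i, r' i * g i = ∑ i ∈ t, r i * g i := by
      intro g
      have h1 : ∑ i, r' i * g i = ∑ i ∈ s, r' i * g i := by
        refine (Finset.sum_subset (Finset.subset_univ s) fun i _ hi => ?_).symm
        simp [r', hi]
      rw [h1, ← Finset.sum_coe_sort, ← Finset.sum_subset (Finset.subset_univ t)]
      · refine Finset.sum_congr rfl fun i hi => ?_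
        simp [r', hi]
      · intro i _ hi
        simp [r', hi]
    have hz := h.eq_zero r' (by
        funext j
        have := congrFun hr1 j
        simp only [Finset.sum_apply, Pi.smul_apply, smul_eq_mul, intVec] at this
        simpa [lin, hsum (fun i => (w i j : ℝ))] using this)
      (by simpa [hr0] using hsum 1) (fun i hi => by simp [r', hi])
    have := congrFun hz i
    simpa [r', hi] using this
  have h1 := hind.card_le_finrank_succ
  rw [Fintype.card_coe] at h1
  refine h1.trans (Nat.succ_le_succ ?_)
  rw [faceDim, affineSpan_convexHull, direction_affineSpan]
  refine Submodule.finrank_mono (vectorSpan_mono ℝ ?_)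
  rintro _ ⟨i, rfl⟩
  exact ⟨i, rfl⟩

/-- The reduced Euler characteristic of the triangulation vanishes, because toggling the apex is a
sign-reversing involution on its faces. -/
lemma euler_good {N n : ℕ} (w : Fin (N + 1) → Fin n → ℤ) :
    ∑ s ∈ Finset.univ.filter (fun s => Good w s ∧ s.Nonempty), (-1 : ℂ) ^ (s.card + 1) = 1 := by
  have h0 : ∑ s ∈ Finset.univ.filter (fun s => Good w s), (-1 : ℂ) ^ (s.card + 1) = 0 := by
    refine Finset.sum_involution (fun s _ => if 0 ∈ s then s.erase 0 else insert 0 s) ?_ ?_ ?_ ?_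
    · intro s _
      split_ifs with h
      · rw [← Finset.card_erase_add_one h]; ring
      · rw [Finset.card_insert_of_notMem h]; ring
    · intro s _ _
      split_ifs with h
      · intro h'; rw [← h'] at h; simp at h
      · intro h'; rw [← h'] at h; simp at h
    · intro s hs
      have hs' := (Finset.mem_filter.1 hs).2
      split_ifs with h
      · simpa using hs'.mono (Finset.erase_subset _ _)
      · simpa using hs'.insert_zero
    · intro s _
      by_cases h : 0 ∈ s
      · simp [h, Finset.insert_erase]
      · simp [h]
  have hsplit : Finset.univ.filter (fun s => Good w s)
      = insert ∅ (Finset.univ.filter (fun s => Good w s ∧ s.Nonempty)) := by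
    ext s
    simp only [Finset.mem_filter, Finset.mem_univ, true_and, Finset.mem_insert]
    rcases s.eq_empty_or_nonempty with rfl | hs
    · simp [good_empty]
    · simp [hs, hs.ne_empty]
  rw [hsplit, Finset.sum_insert (by simp)] at h0
  simp only [Finset.card_empty, zero_add, pow_one] at h0
  linear_combination h0

/-! ### Lattice points of dilates -/

lemma mem_smul_convexHull {M n : ℕ} (w : Fin M → Fin n → ℤ) (q : ℕ) (hq : 0 < q)
    (x : Fin n → ℝ) :
    x ∈ (q : ℝ) • convexHull ℝ (Set.range fun i => intVec (w i)) ↔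
      ∃ l : Fin M → ℝ, (∀ i, 0 ≤ l i) ∧ ∑ i, l i = q ∧ lin w l = x := by
  have hq' : (0 : ℝ) < q := by exact_mod_cast hq
  have hlin : ∀ l : Fin M → ℝ, lin w l = ∑ i, l i • intVec (w i) := fun l => by
    funext j; simp [lin, intVec]
  have hull : ∀ y, y ∈ convexHull ℝ (Set.range fun i => intVec (w i)) ↔
      ∃ l : Fin M → ℝ, (∀ i, 0 ≤ l i) ∧ ∑ i, l i = 1 ∧ lin w l = y := by
    intro y
    constructor
    · intro hy
      refine convexHull_min (t := {y | ∃ l : Fin M → ℝ, (∀ i, 0 ≤ l i) ∧ ∑ i, l i = 1 ∧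
        lin w l = y}) ?_ ?_ hy
      · rintro _ ⟨i, rfl⟩
        refine ⟨Pi.single i 1, fun j => ?_, by simp, ?_⟩
        · by_cases h : j = i
          · subst h; simp
          · simp [h]
        · funext j; simp [lin, intVec, Pi.single_apply]
      · rintro _ ⟨l, hl, hl1, rfl⟩ _ ⟨l', hl', hl1', rfl⟩ a b ha hb hab
        refine ⟨a • l + b • l', fun i => ?_, ?_, ?_⟩
        · simpa using add_nonneg (mul_nonneg ha (hl i)) (mul_nonneg hb (hl' i))
        · simp [Finset.sum_add_distrib, ← Finset.mul_sum, hl1, hl1', hab]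
        · rw [lin_add_smul]
          congr 1
          funext j; simp [lin, Finset.mul_sum, mul_assoc]
    · rintro ⟨l, hl, hl1, rfl⟩
      rw [hlin]
      exact (convex_convexHull ℝ _).sum_mem (fun i _ => hl i) hl1
        fun i _ => subset_convexHull ℝ _ ⟨i, rfl⟩
  have hsc : ∀ (c : ℝ) (l : Fin M → ℝ), lin w (c • l) = c • lin w l := fun c l => by
    funext j; simp [lin, Finset.mul_sum, mul_assoc]
  rw [Set.mem_smul_set_iff_inv_smul_mem₀ hq'.ne', hull]
  constructor
  · rintro ⟨l, hl, hl1, hlx⟩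
    refine ⟨(q : ℝ) • l, fun i => by simpa using mul_nonneg hq'.le (hl i), ?_, ?_⟩
    · simp [← Finset.mul_sum, hl1]
    · rw [hsc, hlx, smul_inv_smul₀ hq'.ne']
  · rintro ⟨l, hl, hl1, rfl⟩
    refine ⟨(q : ℝ)⁻¹ • l, fun i => by simpa using mul_nonneg (inv_nonneg.2 hq'.le) (hl i), ?_, ?_⟩
    · simp [← Finset.mul_sum, hl1, hq'.ne']
    · rw [hsc]

/-- The coefficient vectors, with entries in `[0, 1)`, of the lattice points in the half-open
parallelepiped spanned by the lifted vertices `(w i, 1)`, `i ∈ s`. -/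
def boxPts {M n : ℕ} (w : Fin M → Fin n → ℤ) (s : Finset (Fin M)) : Set (Fin M → ℝ) :=
  {f | (∀ i, 0 ≤ f i ∧ f i < 1) ∧ (∀ i ∉ s, f i = 0) ∧ (∃ b : Fin n → ℤ, lin w f = intVec b) ∧
    ∃ h : ℕ, ∑ i, f i = h}

lemma boxPts_finite {M n : ℕ} {w : Fin M → Fin n → ℤ} {s : Finset (Fin M)} (hs : Good w s) :
    (boxPts w s).Finite := by
  let B : Fin n → ℤ := fun j => ∑ i, |w i j|
  refine Set.Finite.of_injOn
    (f := fun f : Fin M → ℝ => ((fun j => ⌊lin w f j⌋, ⌊∑ i, f i⌋₊) : (Fin n → ℤ) × ℕ))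
    (t := Set.Icc (-B) B ×ˢ Set.Icc 0 M) ?_ ?_ ((Set.finite_Icc _ _).prod (Set.finite_Icc _ _))
  · rintro f ⟨h01, -, ⟨b, hb⟩, ⟨h, hh⟩⟩
    have habs : ∀ j, |b j| ≤ B j := by
      intro j
      have h1 : (b j : ℝ) = ∑ i, f i * (w i j : ℝ) := (congrFun hb j).symm
      have h2 : |(b j : ℝ)| ≤ ∑ i, |(w i j : ℝ)| := by
        rw [h1]
        refine (Finset.abs_sum_le_sum_abs _ _).trans (Finset.sum_le_sum fun i _ => ?_)
        rw [abs_mul, abs_of_nonneg (h01 i).1]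
        exact mul_le_of_le_one_left (abs_nonneg _) (h01 i).2.le
      exact_mod_cast h2
    have hM : (h : ℝ) ≤ M := by
      rw [← hh]
      calc ∑ i, f i ≤ ∑ _i : Fin M, (1 : ℝ) := Finset.sum_le_sum fun i _ => (h01 i).2.le
        _ = M := by simp
    have hM' : h ≤ M := by exact_mod_cast hM
    simp only [Set.mem_prod, hb, hh, intVec, Int.floor_intCast, Nat.floor_natCast, Set.mem_Icc]
    exact ⟨⟨fun j => (abs_le.1 (habs j)).1, fun j => (abs_le.1 (habs j)).2⟩, Nat.zero_le _, hM'⟩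
  · rintro f ⟨-, hf0, ⟨b, hb⟩, ⟨h, hh⟩⟩ f' ⟨-, hf0', ⟨b', hb'⟩, ⟨h', hh'⟩⟩ heq
    simp only [hb, hh, hb', hh', intVec, Int.floor_intCast, Nat.floor_natCast, Prod.mk.injEq]
      at heq
    obtain ⟨h1, rfl⟩ := heq
    have h1' : b = b' := funext fun j => congrFun h1 j
    subst h1'
    refine sub_eq_zero.1 (hs.eq_zero (f - f') ?_ ?_ fun i hi => ?_)
    · rw [lin_sub, hb, hb', sub_self]
    · simp [hh, hh']
    · simp [hf0 i hi, hf0' i hi]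

/-- A triple of a face `s`, a box point `f` of `s` and a positive vector `n` on `s` with
`∑ n - ∑ f = q`. It encodes the lattice point `∑ (n i - f i) w i` of the `q`-th dilate, lying in the
relative interior of the cone over the face `s`. -/
def triples {M n : ℕ} (w : Fin M → Fin n → ℤ) (q : ℕ) :
    Set (Finset (Fin M) × (Fin M → ℝ) × (Fin M → ℕ)) :=
  {z | Good w z.1 ∧ z.2.1 ∈ boxPts w z.1 ∧ (∀ i, z.2.2 i ≠ 0 ↔ i ∈ z.1) ∧
    ∑ i, ((z.2.2 i : ℝ) - z.2.1 i) = q}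

/-- Every lattice point of the `q`-th dilate comes from exactly one triple. -/
lemma bijOn_triples {M n : ℕ} (w : Fin M → Fin n → ℤ) (q : ℕ) (hq : 0 < q) :
    Set.BijOn (fun z : Finset (Fin M) × (Fin M → ℝ) × (Fin M → ℕ) =>
        (fun j => ⌊lin w (fun i => (z.2.2 i : ℝ) - z.2.1 i) j⌋ : Fin n → ℤ)) (triples w q)
      {m | intVec m ∈ (q : ℝ) • convexHull ℝ (Set.range fun i => intVec (w i))} ∧
    ∀ z ∈ triples w q, intVec (fun j => ⌊lin w (fun i => (z.2.2 i : ℝ) - z.2.1 i) j⌋) =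
      lin w (fun i => (z.2.2 i : ℝ) - z.2.1 i) := by
  have hint : ∀ z ∈ triples w q, intVec (fun j => ⌊lin w (fun i => (z.2.2 i : ℝ) - z.2.1 i) j⌋) =
      lin w (fun i => (z.2.2 i : ℝ) - z.2.1 i) := by
    rintro ⟨s, f, v⟩ ⟨-, ⟨-, -, ⟨b, hb⟩, -⟩, -, -⟩
    dsimp only at *
    have : lin w (fun i => (v i : ℝ) - f i) = intVec (fun j => (∑ i, (v i : ℤ) * w i j) - b j) := by
      change lin w ((fun i => (v i : ℝ)) - f) = _
      rw [lin_sub, hb]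
      funext j; simp [lin, intVec]
    rw [this]
    funext j
    simp only [intVec, Int.floor_intCast]
  have hpos : ∀ z ∈ triples w q, (∀ i, 0 ≤ (z.2.2 i : ℝ) - z.2.1 i) ∧
      suppF (fun i => (z.2.2 i : ℝ) - z.2.1 i) = z.1 ∧
      ∀ i, z.2.2 i = ⌈(z.2.2 i : ℝ) - z.2.1 i⌉₊ := by
    rintro ⟨s, f, v⟩ ⟨-, ⟨h01, hf0, -, -⟩, hv, -⟩
    dsimp only at *
    have hin : ∀ i ∈ s, 0 < (v i : ℝ) - f i := fun i hi => by
      have h1 : 1 ≤ v i := Nat.one_le_iff_ne_zero.2 ((hv i).2 hi)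
      have h2 : (1 : ℝ) ≤ v i := by exact_mod_cast h1
      linarith [(h01 i).2]
    have hout : ∀ i ∉ s, v i = 0 ∧ f i = 0 := fun i hi => ⟨by
      by_contra h
      exact hi ((hv i).1 h), hf0 i hi⟩
    refine ⟨fun i => ?_, ?_, fun i => ?_⟩
    · by_cases hi : i ∈ s
      · exact (hin i hi).le
      · simp [hout i hi]
    · ext i
      rw [mem_suppF]
      by_cases hi : i ∈ s
      · simp [hi, (hin i hi).ne']
      · simp [hi, hout i hi]
    · by_cases hi : i ∈ s
      · symm
        rw [Nat.ceil_eq_iff ((hv i).2 hi)]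
        have h1 : 1 ≤ v i := Nat.one_le_iff_ne_zero.2 ((hv i).2 hi)
        push_cast [Nat.cast_sub h1]
        constructor <;> linarith [(h01 i).1, (h01 i).2]
      · simp [hout i hi]
  refine ⟨⟨?_, ?_, ?_⟩, hint⟩
  · intro z hz
    rw [Set.mem_ofPred, hint z hz, mem_smul_convexHull w q hq]
    exact ⟨_, (hpos z hz).1, hz.2.2.2, rfl⟩
  · intro z hz z' hz' heq
    have heq' := congrArg intVec heq
    dsimp only at heq'
    rw [hint z hz, hint z' hz'] at heq'
    obtain ⟨hp, hsz, hc⟩ := hpos z hz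
    obtain ⟨hp', hsz', hc'⟩ := hpos z' hz'
    have hl := Good.unique hp hp' (hsz ▸ hz.1) (hsz' ▸ hz'.1) heq' (hz.2.2.2.trans hz'.2.2.2.symm)
    have h1 : z.1 = z'.1 := by rw [← hsz, ← hsz', hl]
    have h2 : z.2.2 = z'.2.2 := funext fun i => by
      rw [hc i, hc' i]
      exact congrArg _ (congrFun hl i)
    have h3 : z.2.1 = z'.2.1 := funext fun i => by
      have := congrFun hl i
      simp only [h2] at this
      linarith
    exact Prod.ext h1 (Prod.ext h3 h2)
  · intro m hm
    rw [Set.mem_ofPred, mem_smul_convexHull w q hq] at hm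
    obtain ⟨l₀, hl₀, hsum₀, hlin₀⟩ := hm
    obtain ⟨l, hl, hlin, hsum, hg⟩ := exists_good w l₀ hl₀
    rw [hsum₀] at hsum
    rw [hlin₀] at hlin
    let v : Fin M → ℕ := fun i => ⌈l i⌉₊
    let f : Fin M → ℝ := fun i => v i - l i
    have hvf : (fun i => (v i : ℝ) - f i) = l := by funext i; simp [f]
    have hfl : f = (fun i => (v i : ℝ)) - l := rfl
    refine ⟨(suppF l, f, v), ⟨hg, ⟨fun i => ⟨?_, ?_⟩, fun i hi => ?_, ?_, ?_⟩, fun i => ?_, ?_⟩, ?_⟩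
    · simpa [f, v] using Nat.le_ceil (l i)
    · have := Nat.ceil_lt_add_one (hl i)
      simp only [f, v]; linarith
    · rw [mem_suppF, not_not] at hi
      simp [f, v, hi]
    · refine ⟨fun j => (∑ i, (v i : ℤ) * w i j) - m j, ?_⟩
      rw [hfl, lin_sub, hlin]
      funext j; simp [lin, intVec]
    · have h1 : ∑ i, f i = ((∑ i, (v i : ℤ) - q : ℤ) : ℝ) := by
        simp [f, hsum]
      have h2 : (0 : ℝ) ≤ ∑ i, f i := Finset.sum_nonneg fun i _ => by
        simpa [f, v] using Nat.le_ceil (l i)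
      rw [h1] at h2
      obtain ⟨h, hh⟩ := Int.eq_ofNat_of_zero_le (by exact_mod_cast h2 : 0 ≤ (∑ i, (v i : ℤ) - q))
      refine ⟨h, ?_⟩
      rw [h1, hh]; simp
    · rw [mem_suppF]
      simp only [v, ne_eq, Nat.ceil_eq_zero, not_le]
      exact ⟨fun h => h.ne', fun h => lt_of_le_of_ne (hl i) (Ne.symm h)⟩
    · change ∑ i, ((v i : ℝ) - f i) = q
      rw [← hsum]
      exact Finset.sum_congr rfl fun i _ => congrFun hvf i
    · dsimp only
      rw [hvf, hlin]
      funext j; simp [intVec]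

/-! ### The weighted Ehrhart polynomial -/

lemma eval_bind₁' {σ τ : Type*} (x : τ → ℂ) (g : σ → MvPolynomial τ ℂ) (p : MvPolynomial σ ℂ) :
    MvPolynomial.eval x (MvPolynomial.bind₁ g p) =
      MvPolynomial.eval (fun j => MvPolynomial.eval x (g j)) p :=
  MvPolynomial.eval₂Hom_bind₁ (RingHom.id ℂ) x g p

/-- Existence of the weighted Ehrhart polynomial together with its constant term, for the convex
hull of a finite nonempty family of lattice points and an arbitrary polynomial weight. -/
lemma exists_ehrhart {N n : ℕ} (w : Fin (N + 1) → Fin n → ℤ) (p : MvPolynomial (Fin n) ℂ) (d : ℕ)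
    (hp : p.totalDegree ≤ d) :
    ∃ D : ℂ[X], D.natDegree ≤
        faceDim (convexHull ℝ (Set.range fun i => intVec (w i))) + d ∧
      D.eval 0 = MvPolynomial.eval 0 p ∧
      ∀ q : ℕ, 0 < q → D.eval (q : ℂ) =
        ∑ᶠ m ∈ {m : Fin n → ℤ |
            intVec m ∈ (q : ℝ) • convexHull ℝ (Set.range fun i => intVec (w i))},
          MvPolynomial.eval (fun j => ((intVec m j : ℝ) : ℂ)) p := by
  -- `Q f` is the weight in the coordinates `n`, after the shift by `f`
  let Q : (Fin (N + 1) → ℝ) → MvPolynomial (Fin (N + 1)) ℂ := fun f =>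
    MvPolynomial.bind₁ (fun j => ∑ i,
      (MvPolynomial.X i - MvPolynomial.C (f i : ℂ)) * MvPolynomial.C (w i j : ℂ)) p
  have hQdeg : ∀ f, (Q f).totalDegree ≤ d := by
    intro f
    refine (totalDegree_bind₁_le _ (fun j => ?_) p).trans hp
    refine (MvPolynomial.totalDegree_finsetSum _ _).trans (Finset.sup_le fun i _ => ?_)
    refine (MvPolynomial.totalDegree_mul _ _).trans ?_
    rw [MvPolynomial.totalDegree_C, add_zero]
    exact (MvPolynomial.totalDegree_sub_C_le _ _).trans (by simp)
  have hQeval : ∀ f (v : Fin (N + 1) → ℕ), MvPolynomial.eval (fun i => (v i : ℂ)) (Q f) =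
      MvPolynomial.eval (fun j => ((lin w (fun i => (v i : ℝ) - f i) j : ℝ) : ℂ)) p := by
    intro f v
    simp only [Q, eval_bind₁']
    congr 2
    funext j
    simp [lin]
  have hQ0 : MvPolynomial.eval 0 (Q 0) = MvPolynomial.eval 0 p := by
    simp only [Q, eval_bind₁']
    congr 2
    funext j
    simp
  choose! K hKdeg hK0 hK using
    fun (f : Fin (N + 1) → ℝ) (s : Finset (Fin (N + 1))) (hs : s.Nonempty) =>
      exists_sum_posComp (Q f) d (hQdeg f) s hs
  have hbox : ∀ s, ∃ A : Finset (Fin (N + 1) → ℝ), Good w s → ∀ f, f ∈ A ↔ f ∈ boxPts w s := by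
    intro s
    by_cases hs : Good w s
    · exact ⟨(boxPts_finite hs).toFinset, fun _ f => by simp⟩
    · exact ⟨∅, fun h => absurd h hs⟩
  choose A hA using hbox
  choose! h hh using fun (f : Fin (N + 1) → ℝ) (hf : ∃ h : ℕ, ∑ i, f i = h) => hf
  let T : Finset (Finset (Fin (N + 1))) := Finset.univ.filter fun s => Good w s ∧ s.Nonempty
  have hT : ∀ s, s ∈ T ↔ Good w s ∧ s.Nonempty := fun s => by simp [T]
  let D : ℂ[X] := ∑ s ∈ T, ∑ f ∈ A s, (K f s).comp (X + C (h f : ℂ))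
  have hD : ∀ q : ℕ, D.eval (q : ℂ) = ∑ s ∈ T, ∑ f ∈ A s, (K f s).eval ((q + h f : ℕ) : ℂ) := by
    intro q
    simp [D, eval_finsetSum]
  refine ⟨D, ?_, ?_, ?_⟩
  · refine Polynomial.natDegree_sum_le_of_forall_le _ _ fun s hs => ?_
    refine Polynomial.natDegree_sum_le_of_forall_le _ _ fun f hf => ?_
    obtain ⟨hg, hne⟩ := (hT s).1 hs
    rw [natDegree_comp, natDegree_X_add_C, mul_one]
    have h1 := hKdeg f s hne
    have h2 := hg.card_le
    omega
  · have hz := hD 0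
    rw [Nat.cast_zero] at hz
    rw [hz, ← one_mul (MvPolynomial.eval 0 p), ← euler_good w, Finset.sum_mul]
    refine Finset.sum_congr rfl fun s hs => ?_
    obtain ⟨hg, hne⟩ := (hT s).1 hs
    have h0 : (0 : Fin (N + 1) → ℝ) ∈ boxPts w s :=
      ⟨fun i => by simp, fun i _ => rfl, ⟨0, by funext j; simp [lin, intVec]⟩, 0, by simp⟩
    rw [Finset.sum_eq_single_of_mem 0 ((hA s hg 0).2 h0)]
    · have : h 0 = 0 := by
        have := hh 0 ⟨0, by simp⟩
        simp only [Pi.zero_apply, Finset.sum_const_zero] at this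
        exact_mod_cast this.symm
      rw [this, add_zero, Nat.cast_zero, hK0 _ _ hne, hQ0]
    · intro f hf hf0
      obtain ⟨h01, hfs, -, hfh⟩ := (hA s hg f).1 hf
      have hsum := hh f hfh
      have hpos : 0 < h f := by
        rw [Nat.pos_iff_ne_zero]
        intro hz
        rw [hz, Nat.cast_zero, Finset.sum_eq_zero_iff_of_nonneg fun i _ => (h01 i).1] at hsum
        exact hf0 (funext fun i => hsum i (Finset.mem_univ i))
      -- `h f = ∑ f < |s|`, so no positive vector on `s` has total `h f`
      have hlt : h f < s.card := by
        have h1 : ∑ i ∈ s, f i = h f := by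
          rw [← hsum]
          exact Finset.sum_subset (Finset.subset_univ s) fun i _ hi => hfs i hi
        have h2 : ∑ i ∈ s, f i < ∑ _i ∈ s, (1 : ℝ) :=
          Finset.sum_lt_sum_of_nonempty hne fun i _ => (h01 i).2
        rw [h1] at h2
        simpa using h2
      rw [zero_add, hK f s hne _ hpos]
      refine Finset.sum_eq_zero fun v hv => ?_
      obtain ⟨hv1, hv2⟩ := mem_posComp.1 hv
      have : s.card ≤ ∑ i ∈ s, v i := by
        rw [Finset.card_eq_sum_ones]
        exact Finset.sum_le_sum fun i hi => Nat.one_le_iff_ne_zero.2 ((hv2 i).2 hi)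
      omega
  · intro q hq
    obtain ⟨hbij, hint⟩ := bijOn_triples w q hq
    rw [← finsum_mem_eq_of_bijOn _ hbij (f := fun z => MvPolynomial.eval
      (fun j => ((lin w (fun i => (z.2.2 i : ℝ) - z.2.1 i) j : ℝ) : ℂ)) p)
      (fun z hz => by rw [hint z hz])]
    let Z : Finset (Σ _ : Finset (Fin (N + 1)), Σ _ : Fin (N + 1) → ℝ, Fin (N + 1) → ℕ) :=
      T.sigma fun s => (A s).sigma fun f => posComp s (q + h f)
    have hZ : Set.BijOn (fun z : Σ _ : Finset (Fin (N + 1)), Σ _ : Fin (N + 1) → ℝ,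
        Fin (N + 1) → ℕ => (z.1, z.2.1, z.2.2)) Z (triples w q) := by
      have hsub : ∀ (s : Finset (Fin (N + 1))) (f : Fin (N + 1) → ℝ) (v : Fin (N + 1) → ℕ),
          f ∈ boxPts w s → (∀ i, v i ≠ 0 ↔ i ∈ s) →
          (∑ i ∈ s, v i = q + h f ↔ ∑ i, ((v i : ℝ) - f i) = q) := by
        intro s f v hf hv
        have h1 : ∑ i ∈ s, v i = ∑ i, v i :=
          Finset.sum_subset (Finset.subset_univ s) fun i _ hi => by
            by_contra h
            exact hi ((hv i).1 h)
        rw [h1, Finset.sum_sub_distrib, hh f hf.2.2.2, sub_eq_iff_eq_add]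
        exact_mod_cast Iff.rfl
      refine ⟨?_, ?_, ?_⟩
      · rintro ⟨s, f, v⟩ hz
        simp only [Z, Finset.coe_sigma, Set.mem_sigma_iff, Finset.mem_coe, mem_posComp, hT] at hz
        obtain ⟨⟨hg, hne⟩, hf, hv1, hv2⟩ := hz
        have hf' := (hA s hg f).1 hf
        exact ⟨hg, hf', hv2, (hsub s f v hf' hv2).1 hv1⟩
      · rintro ⟨s, f, v⟩ _ ⟨s', f', v'⟩ _ heq
        simp only [Prod.mk.injEq] at heq
        obtain ⟨rfl, rfl, rfl⟩ := heq
        rfl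
      · rintro ⟨s, f, v⟩ ⟨hg, hf, hv2, hv1⟩
        dsimp only at hg hf hv2 hv1
        refine ⟨⟨s, f, v⟩, ?_, rfl⟩
        simp only [Z, Finset.coe_sigma, Set.mem_sigma_iff, Finset.mem_coe, mem_posComp, hT]
        have hv1' := (hsub s f v hf hv2).2 hv1
        refine ⟨⟨hg, ?_⟩, (hA s hg f).2 hf, hv1', hv2⟩
        rw [Finset.nonempty_iff_ne_empty]
        rintro rfl
        rw [Finset.sum_empty] at hv1'
        omega
    rw [← finsum_mem_eq_of_bijOn _ hZ (f := fun z => MvPolynomial.eval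
      (fun j => ((lin w (fun i => (z.2.2 i : ℝ) - z.2.1 i) j : ℝ) : ℂ)) p) (fun z hz => rfl),
      finsum_mem_coe_finset, hD, Finset.sum_sigma]
    refine Finset.sum_congr rfl fun s hs => ?_
    rw [Finset.sum_sigma]
    refine Finset.sum_congr rfl fun f _ => ?_
    rw [hK f s ((hT s).1 hs).2 _ (by omega)]
    exact Finset.sum_congr rfl fun v _ => hQeval f v

/-- Let `F ⊂ ℝ^n` be a lattice polytope of dimension `k` and `φ` a
homogeneous polynomial function of degree `d`.  Then there is a unique polynomial
`D_{φ,F}` of degree at most `k + d` with `D_{φ,F}(q) = ∑_{m ∈ ℤ^n ∩ qF} φ(m)` for all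
integers `q > 0`, and its constant term is `D_{φ,F}(0) = φ(0)`. -/
theorem stmt5 (n k d : ℕ) (F : Set (Fin n → ℝ))
    (S : Finset (Fin n → ℤ)) (hS : S.Nonempty)
    (hF : F = convexHull ℝ (intVec '' (S : Set (Fin n → ℤ))))
    (hdim : faceDim F = k)
    (φ : (Fin n → ℝ) → ℂ) (p : MvPolynomial (Fin n) ℂ) (hp : p.IsHomogeneous d)
    (hφ : ∀ x, φ x = MvPolynomial.eval (fun i => (x i : ℂ)) p) :
    (∃! D : Polynomial ℂ, D.natDegree ≤ k + d ∧
        ∀ q : ℕ, 0 < q →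
          D.eval (q : ℂ) = ∑ᶠ m ∈ {m : Fin n → ℤ | intVec m ∈ (q : ℝ) • F}, φ (intVec m)) ∧
      (∀ D : Polynomial ℂ, (D.natDegree ≤ k + d ∧
        ∀ q : ℕ, 0 < q →
          D.eval (q : ℂ) = ∑ᶠ m ∈ {m : Fin n → ℤ | intVec m ∈ (q : ℝ) • F}, φ (intVec m)) →
        D.coeff 0 = φ 0) := by
  obtain ⟨N, hN⟩ : ∃ N, S.card = N + 1 := ⟨S.card - 1, by have := hS.card_pos; omega⟩
  let w : Fin (N + 1) → Fin n → ℤ := fun i => ((S.equivFinOfCardEq hN).symm i : Fin n → ℤ)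
  have hrange : intVec '' (S : Set (Fin n → ℤ)) = Set.range fun i => intVec (w i) := by
    ext x
    constructor
    · rintro ⟨m, hm, rfl⟩
      exact ⟨S.equivFinOfCardEq hN ⟨m, hm⟩, by simp [w]⟩
    · rintro ⟨i, rfl⟩
      exact ⟨w i, ((S.equivFinOfCardEq hN).symm i).2, rfl⟩
  obtain ⟨D, hdeg, hD0, hD⟩ := exists_ehrhart w p d hp.totalDegree_le
  rw [← hrange, ← hF] at hdeg hD
  rw [hdim] at hdeg
  have hDφ : ∀ q : ℕ, 0 < q → D.eval (q : ℂ) =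
      ∑ᶠ m ∈ {m : Fin n → ℤ | intVec m ∈ (q : ℝ) • F}, φ (intVec m) := by
    intro q hq
    rw [hD q hq]
    simp only [hφ]
  have huniq : ∀ E : Polynomial ℂ, (∀ q : ℕ, 0 < q → E.eval (q : ℂ) =
      ∑ᶠ m ∈ {m : Fin n → ℤ | intVec m ∈ (q : ℝ) • F}, φ (intVec m)) → E = D := by
    intro E hE
    refine Polynomial.eq_of_infinite_eval_eq E D ?_
    refine Set.Infinite.mono (s := Set.range fun q : ℕ => ((q + 1 : ℕ) : ℂ)) ?_
      (Set.infinite_range_of_injective fun a b hab => by simpa using hab)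
    rintro _ ⟨q, rfl⟩
    exact (hE _ q.succ_pos).trans (hDφ _ q.succ_pos).symm
  refine ⟨⟨D, ⟨hdeg, hDφ⟩, fun E hE => huniq E hE.2⟩, fun E hE => ?_⟩
  rw [huniq E hE.2, Polynomial.coeff_zero_eq_eval_zero, hD0, hφ]
  congr 2
end
end
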